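/- arXiv:1807.08899 — 2 statements merged into one kernel-verified Lean document; each statement's English description precedes it below -/
import Mathlib

section
/- Let f₁, f₂, …, f_k ∈ ℤ[x] be irreducible polynomials, no two of which are associates, and let f = f₁f₂⋯f_k. Suppose that f does not vanish identically modulo any prime (i.e., for every prime p there is an integer n with p ∤ f(n)). For each prime p let ω_f(p) be the number of solutions in ℤ/pℤ of f(x) ≡ 0 (mod p). Then the infinite product over all primes p of (1 − 1/p)^{−k} · (1 − ω_f(p)/p) converges; that is, the partial products over primes p ≤ N tend to a finite positive limit as N → ∞. -/
open Filter

/-!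
For an irreducible `f` let `K = ℚ[x]/(f)`. For all large primes `p` the number `ω_f(p)` equals the
number `a(p)` of ideals of norm `p` in `𝓞 K`: the rings `𝓞 K` and `ℤ[x]/(f)` agree after inverting
a single integer, and both numbers count ring homomorphisms to `𝔽_p`. Comparing the Euler products
of `ζ_K` and `ζ`, which both have a simple pole at `1`, shows that `∑ (a(p) - 1) p ^ (-1 - ε)` has a
limit as `ε → 0⁺`. The Hardy–Littlewood–Karamata Tauberian theorem, for which the bound
`a(p) - 1 = O(1)` is a sufficient Tauberian condition, turns this into the convergence of
`∑ (ω_f(p) - 1) / p`.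

Distinct irreducible factors have no common root modulo a large prime, so `ω_f` is the sum of the
`ω_{f_i}` for large `p`. The logarithm of the factor of the product at `p` is
`(k - ω_f(p)) / p + O(1 / p ^ 2)`.
-/

section PolynomialApproximation

open MeasureTheory Polynomial

theorem exists_continuous_le_indicator_Ici_le (τ : ℝ) {δ : ℝ} (hδ : 0 < δ) :
    ∃ χ₁ χ₂ : ℝ → ℝ, Continuous χ₁ ∧ Continuous χ₂ ∧
      (∀ t, χ₁ t ≤ (Set.Ici τ).indicator 1 t) ∧ (∀ t, (Set.Ici τ).indicator 1 t ≤ χ₂ t) ∧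
      ∀ a b : ℝ, a ≤ b → ∫ t in a..b, (χ₂ t - χ₁ t) ≤ δ := by
  let χ : ℝ → ℝ → ℝ := fun a t => Real.smoothTransition ((t - a) / (δ / 2))
  have hη : 0 < δ / 2 := half_pos hδ
  have χ_cont (a) : Continuous (χ a) := Real.smoothTransition.continuous.comp (by fun_prop)
  have χ_nonneg (a t) : 0 ≤ χ a t := Real.smoothTransition.nonneg _
  have χ_le_one (a t) : χ a t ≤ 1 := Real.smoothTransition.le_one _
  have χ_eq_zero {a t} (h : t ≤ a) : χ a t = 0 := Real.smoothTransition.zero_of_nonpos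
    (div_nonpos_of_nonpos_of_nonneg (sub_nonpos.2 h) hη.le)
  have χ_eq_one {a t} (h : a + δ / 2 ≤ t) : χ a t = 1 := Real.smoothTransition.one_of_one_le
    ((one_le_div hη).2 (by linarith))
  let J : Set ℝ := Set.Icc (τ - δ / 2) (τ + δ / 2)
  have hdiff (t : ℝ) : χ (τ - δ / 2) t - χ τ t ≤ J.indicator 1 t := by
    refine Set.le_indicator_apply (fun _ => ?_) fun ht => ?_
    · exact (sub_le_self _ (χ_nonneg τ t)).trans (χ_le_one _ t)
    · rw [Set.mem_Icc, not_and_or, not_le, not_le] at ht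
      rcases ht with h | h
      · simpa only [χ_eq_zero h.le, zero_sub, neg_nonpos] using χ_nonneg τ t
      · simpa only [χ_eq_one h.le, sub_nonpos] using χ_le_one (τ - δ / 2) t
  have hint : Integrable (J.indicator (1 : ℝ → ℝ)) :=
    (integrable_indicator_iff measurableSet_Icc).2 (integrableOn_const (by simp))
  refine ⟨χ τ, χ (τ - δ / 2), χ_cont _, χ_cont _,
    fun t => Set.le_indicator_apply (fun _ => χ_le_one τ t) fun ht => (χ_eq_zero ?_).le,
    fun t => Set.indicator_apply_le' (fun ht => (χ_eq_one ?_).ge) fun _ => χ_nonneg _ t,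
    fun a b hab => ?_⟩
  · exact (not_le.1 ht).le
  · simpa using ht
  · calc ∫ t in a..b, (χ (τ - δ / 2) t - χ τ t) ≤ ∫ t in a..b, J.indicator 1 t :=
          intervalIntegral.integral_mono hab (((χ_cont _).sub (χ_cont _)).intervalIntegrable _ _)
            hint.intervalIntegrable hdiff
      _ ≤ ∫ t, J.indicator 1 t := by
          rw [intervalIntegral.integral_of_le hab]
          exact setIntegral_le_integral hint
            (.of_forall fun t => Set.indicator_nonneg (fun _ _ => zero_le_one) t)
      _ = δ := by
          rw [integral_indicator_one measurableSet_Icc, Real.volume_real_Icc_of_le (by linarith)]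
          ring

theorem exists_polynomial_le_eval_le_add {a b : ℝ} {f : ℝ → ℝ} (hf : ContinuousOn f (Set.Icc a b))
    {δ : ℝ} (hδ : 0 < δ) :
    ∃ P : ℝ[X], ∀ t ∈ Set.Icc a b, f t ≤ P.eval t ∧ P.eval t ≤ f t + δ := by
  obtain ⟨P, hP⟩ := exists_polynomial_near_of_continuousOn a b (fun t => f t + δ / 2)
    (hf.add continuousOn_const) (δ / 2) (half_pos hδ)
  refine ⟨P, fun t ht => ?_⟩
  have := abs_lt.1 (hP t ht)
  constructor <;> linarith

/- Karamata's device: the summand `t` contributes the Abel sum itself, and the factor `t * (1 - t)`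
makes all other contributions have a limit even though `∑ w` diverges. -/
theorem exists_continuous_indicator_Ici_eq {τ : ℝ} (h0 : 0 < τ) (h1 : τ < 1) :
    ∃ A B : ℝ → ℝ, Continuous A ∧ Continuous B ∧ (∀ t, A t ≤ B t) ∧
      (∀ t, B t - A t ≤ τ⁻¹ + (1 - τ)⁻¹) ∧ ∀ t, (Set.Ici τ).indicator 1 t =
        t + t * (1 - t) * (A t + (B t - A t) * (Set.Ici τ).indicator 1 t) := by
  have hA (t : ℝ) : 1 - τ ≤ 1 - min t τ := by linarith [min_le_right t τ]
  have hB (t : ℝ) : τ ≤ max t τ := le_max_right t τ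
  have hA0 (t : ℝ) : 0 < 1 - min t τ := (sub_pos.2 h1).trans_le (hA t)
  have hB0 (t : ℝ) : 0 < max t τ := h0.trans_le (hB t)
  refine ⟨fun t => -(1 - min t τ)⁻¹, fun t => (max t τ)⁻¹,
    (Continuous.inv₀ (by fun_prop) fun t => (hA0 t).ne').neg,
    Continuous.inv₀ (by fun_prop) fun t => (hB0 t).ne', fun t => ?_, fun t => ?_, fun t => ?_⟩
  · exact (neg_nonpos.2 (inv_nonneg.2 (hA0 t).le)).trans (inv_nonneg.2 (hB0 t).le)
  · rw [sub_neg_eq_add]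
    exact add_le_add (inv_anti₀ h0 (hB t)) (inv_anti₀ (sub_pos.2 h1) (hA t))
  · rcases le_or_gt τ t with h | h
    · have : t ≠ 0 := (h0.trans_le h).ne'
      rw [Set.indicator_of_mem (Set.mem_Ici.2 h), Pi.one_apply]
      simp only [max_eq_left h]
      field_simp
      ring
    · have : 1 - t ≠ 0 := by linarith
      rw [Set.indicator_of_notMem (by simpa using h)]
      simp only [min_eq_left h.le]
      field_simp
      ring

theorem exists_polynomial_indicator_Ici_between {τ : ℝ} (h0 : 0 < τ) (h1 : τ < 1) {δ : ℝ}
    (hδ : 0 < δ) :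
    ∃ P₁ P₂ : ℝ[X], (∀ t ∈ Set.Icc (0 : ℝ) 1,
      t + t * (1 - t) * P₁.eval t ≤ (Set.Ici τ).indicator 1 t ∧
      (Set.Ici τ).indicator 1 t ≤ t + t * (1 - t) * P₂.eval t ∧ P₁.eval t ≤ P₂.eval t) ∧
      ∫ t in (0 : ℝ)..1, (P₂ - P₁).eval t ≤ δ := by
  obtain ⟨A, B, hA, hB, hAB, hBA, hstep⟩ := exists_continuous_indicator_Ici_eq h0 h1
  set M := τ⁻¹ + (1 - τ)⁻¹
  have hM : 0 < M := add_pos (inv_pos.2 h0) (inv_pos.2 (sub_pos.2 h1))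
  obtain ⟨χ₁, χ₂, hχ₁, hχ₂, hle₁, hle₂, hint⟩ :=
    exists_continuous_le_indicator_Ici_le τ (div_pos (half_pos hδ) hM)
  have hle (t) : χ₁ t ≤ χ₂ t := (hle₁ t).trans (hle₂ t)
  obtain ⟨P₁, hP₁⟩ := exists_polynomial_le_eval_le_add (a := 0) (b := 1)
    (f := fun t => A t + (B t - A t) * χ₁ t - δ / 4) (by fun_prop) (by positivity : 0 < δ / 4)
  obtain ⟨P₂, hP₂⟩ := exists_polynomial_le_eval_le_add (a := 0) (b := 1)
    (f := fun t => A t + (B t - A t) * χ₂ t) (by fun_prop) (by positivity : 0 < δ / 4)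
  simp only [sub_add_cancel] at hP₁
  refine ⟨P₁, P₂, fun t ht => ?_, ?_⟩
  · have htt : 0 ≤ t * (1 - t) := mul_nonneg ht.1 (sub_nonneg.2 ht.2)
    have mul_le {x y : ℝ} (hxy : x ≤ y) : (B t - A t) * x ≤ (B t - A t) * y :=
      mul_le_mul_of_nonneg_left hxy (sub_nonneg.2 (hAB t))
    refine ⟨?_, ?_, ?_⟩
    · rw [hstep t]
      gcongr
      linarith [(hP₁ t ht).2, mul_le (hle₁ t)]
    · rw [hstep t]
      gcongr
      linarith [(hP₂ t ht).1, mul_le (hle₂ t)]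
    · linarith [(hP₁ t ht).2, (hP₂ t ht).1, mul_le (hle t)]
  · calc ∫ t in (0 : ℝ)..1, (P₂ - P₁).eval t
        ≤ ∫ t in (0 : ℝ)..1, (M * (χ₂ t - χ₁ t) + δ / 2) := by
          refine intervalIntegral.integral_mono_on zero_le_one
            ((P₂ - P₁).continuous.intervalIntegrable _ _)
            (Continuous.intervalIntegrable (by fun_prop) _ _) fun t ht => ?_
          have := mul_le_mul_of_nonneg_right (hBA t) (sub_nonneg.2 (hle t))
          rw [eval_sub]
          linarith [(hP₁ t ht).1, (hP₂ t ht).2]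
      _ = M * (∫ t in (0 : ℝ)..1, (χ₂ t - χ₁ t)) + δ / 2 := by
          rw [intervalIntegral.integral_add (Continuous.intervalIntegrable (by fun_prop) _ _)
            (by simp), intervalIntegral.integral_const_mul]
          simp
      _ ≤ M * (δ / 2 / M) + δ / 2 := by gcongr; exact hint 0 1 zero_le_one
      _ = δ := by field_simp; ring

end PolynomialApproximation

section LogMoment

open Polynomial

/-- The functional sending `X ^ k` to `log ((k + 2) / (k + 1))`: it is the limit, as `ε → 0⁺`, of
`∑ w * t * (1 - t) * R(t)` over `t = exp (-(ε * ℓ))`, for weights `w` satisfying the hypotheses of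
`tendsto_tsum_indicator_le_atTop`. -/
noncomputable def logMoment (R : ℝ[X]) : ℝ :=
  R.sum fun k a => a * Real.log ((k + 2) / (k + 1))

theorem integral_rpow_mul_eval (R : ℝ[X]) {u : ℝ} (hu : 0 ≤ u) :
    ∫ t in (0 : ℝ)..1, t ^ u * R.eval t = R.sum fun k a => a * ((k : ℝ) + 1 + u)⁻¹ := by
  have hexpand : ∀ t ∈ Set.uIcc (0 : ℝ) 1,
      t ^ u * R.eval t = ∑ k ∈ R.support, R.coeff k * t ^ ((k : ℝ) + u) := by
    intro t ht
    rw [Set.uIcc_of_le zero_le_one] at ht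
    rw [eval_eq_sum, Polynomial.sum, Finset.mul_sum]
    refine Finset.sum_congr rfl fun k _ => ?_
    rw [Real.rpow_add_of_nonneg ht.1 k.cast_nonneg hu, Real.rpow_natCast]
    ring
  have hexp (k : ℕ) : -1 < (k : ℝ) + u := by linarith [k.cast_nonneg (α := ℝ)]
  rw [intervalIntegral.integral_congr hexpand, intervalIntegral.integral_finsetSum fun k _ =>
    (intervalIntegral.intervalIntegrable_rpow' (hexp k)).const_mul _, Polynomial.sum]
  refine Finset.sum_congr rfl fun k _ => ?_
  rw [intervalIntegral.integral_const_mul, integral_rpow (.inl (hexp k)), Real.one_rpow,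
    Real.zero_rpow (by linarith [hexp k]), sub_zero, one_div, add_right_comm]

theorem intervalIntegrable_inv_natCast_add (k : ℕ) :
    IntervalIntegrable (fun u : ℝ => ((k : ℝ) + 1 + u)⁻¹) MeasureTheory.volume 0 1 := by
  refine ContinuousOn.intervalIntegrable (ContinuousOn.inv₀ (by fun_prop) fun u hu => ?_)
  rw [Set.uIcc_of_le zero_le_one] at hu
  linarith [hu.1, k.cast_nonneg (α := ℝ)]

theorem logMoment_eq_integral (R : ℝ[X]) :
    logMoment R = ∫ u in (0 : ℝ)..1, R.sum fun k a => a * ((k : ℝ) + 1 + u)⁻¹ := by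
  simp only [logMoment, Polynomial.sum]
  rw [intervalIntegral.integral_finsetSum fun k _ =>
    (intervalIntegrable_inv_natCast_add k).const_mul _]
  refine Finset.sum_congr rfl fun k _ => ?_
  rw [intervalIntegral.integral_const_mul,
    intervalIntegral.integral_comp_add_left (fun x : ℝ => x⁻¹) ((k : ℝ) + 1),
    integral_inv_of_pos (by positivity) (by positivity)]
  ring_nf

theorem logMoment_le_integral {R : ℝ[X]} (hR : ∀ t ∈ Set.Icc (0 : ℝ) 1, 0 ≤ R.eval t) :
    logMoment R ≤ ∫ t in (0 : ℝ)..1, R.eval t := by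
  rw [logMoment_eq_integral]
  calc ∫ u in (0 : ℝ)..1, R.sum (fun k a => a * ((k : ℝ) + 1 + u)⁻¹)
      ≤ ∫ _ in (0 : ℝ)..1, ∫ t in (0 : ℝ)..1, R.eval t := by
        refine intervalIntegral.integral_mono_on zero_le_one ?_ (by simp) fun u hu => ?_
        · simp only [Polynomial.sum]
          simpa only [Finset.sum_fn] using IntervalIntegrable.sum R.support fun k _ =>
            (intervalIntegrable_inv_natCast_add k).const_mul (R.coeff k)
        · rw [← integral_rpow_mul_eval R hu.1]
          refine intervalIntegral.integral_mono_on zero_le_one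
            (((Real.continuous_rpow_const hu.1).mul R.continuous).intervalIntegrable _ _)
            (R.continuous.intervalIntegrable _ _) fun t ht => ?_
          exact mul_le_of_le_one_left (hR t ht) (Real.rpow_le_one ht.1 ht.2 hu.1)
    _ = ∫ t in (0 : ℝ)..1, R.eval t := by simp

end LogMoment

section Tauberian

open Polynomial Topology

variable {ι : Type*} {ℓ w c : ι → ℝ} {ε : ℝ}

/-- The general Dirichlet series `∑ wᵢ e^{-ε ℓᵢ}` with frequencies `ℓ` and coefficients `w`, as a
function of a real variable `ε`. It is `0` where the series diverges. -/
noncomputable def generalDirichletSeries (ℓ w : ι → ℝ) (ε : ℝ) : ℝ :=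
  ∑' i, w i * Real.exp (-(ε * ℓ i))

theorem tendsto_const_mul_nhdsGT_zero {a : ℝ} (ha : 0 < a) :
    Tendsto (fun ε : ℝ => a * ε) (𝓝[>] 0) (𝓝[>] 0) :=
  fun _ hs => eventually_nhdsGT_zero_mul_left ha hs

theorem hasSum_mul_eval_exp (hw : ∀ ε > 0, Summable fun i => w i * Real.exp (-(ε * ℓ i)))
    (R : ℝ[X]) (hε : 0 < ε) :
    HasSum (fun i => w i * (X * (1 - X) * R).eval (Real.exp (-(ε * ℓ i))))
      (R.sum fun k a => a * (generalDirichletSeries ℓ w ((k + 1) * ε) -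
        generalDirichletSeries ℓ w ((k + 2) * ε))) := by
  have hmonomial : ∀ k ∈ R.support, HasSum
      (fun i => R.coeff k * (w i * Real.exp (-((k + 1) * ε * ℓ i)) -
        w i * Real.exp (-((k + 2) * ε * ℓ i))))
      (R.coeff k * (generalDirichletSeries ℓ w ((k + 1) * ε) -
        generalDirichletSeries ℓ w ((k + 2) * ε))) := fun k _ =>
    ((hw _ (by positivity)).hasSum.sub (hw _ (by positivity)).hasSum).mul_left _
  refine (hasSum_sum hmonomial).congr_fun fun i => ?_
  rw [eval_mul, eval_eq_sum (p := R), Polynomial.sum, Finset.mul_sum, Finset.mul_sum]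
  refine Finset.sum_congr rfl fun k _ => ?_
  have hpow (m : ℕ) : Real.exp (-(m * ε * ℓ i)) = Real.exp (-(ε * ℓ i)) ^ m := by
    rw [← Real.exp_nat_mul]; ring_nf
  have h1 := hpow (k + 1)
  have h2 := hpow (k + 2)
  push_cast at h1 h2
  rw [h1, h2]
  simp only [eval_mul, eval_sub, eval_X, eval_one]
  ring

theorem tendsto_tsum_mul_eval_exp (hw : ∀ ε > 0, Summable fun i => w i * Real.exp (-(ε * ℓ i)))
    {m : ℕ → ℝ} (hm : ∀ k : ℕ, Tendsto (fun ε => generalDirichletSeries ℓ w ((k + 1) * ε) -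
      generalDirichletSeries ℓ w ((k + 2) * ε)) (𝓝[>] 0) (𝓝 (m k))) (R : ℝ[X]) :
    Tendsto (fun ε => ∑' i, w i * (X * (1 - X) * R).eval (Real.exp (-(ε * ℓ i)))) (𝓝[>] 0)
      (𝓝 (R.sum fun k a => a * m k)) := by
  have hlim : Tendsto (fun ε => R.sum fun k a => a * (generalDirichletSeries ℓ w ((k + 1) * ε) -
      generalDirichletSeries ℓ w ((k + 2) * ε))) (𝓝[>] 0) (𝓝 (R.sum fun k a => a * m k)) :=
    tendsto_finsetSum _ fun k _ => (hm k).const_mul _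
  refine hlim.congr' ?_
  filter_upwards [self_mem_nhdsWithin] with ε (hε : 0 < ε)
  exact (hasSum_mul_eval_exp hw R hε).tsum_eq.symm

theorem tendsto_tsum_mul_eval_exp_logMoment
    (hw : ∀ ε > 0, Summable fun i => w i * Real.exp (-(ε * ℓ i))) {z : ℝ}
    (hz : Tendsto (fun ε => generalDirichletSeries ℓ w ε + Real.log ε) (𝓝[>] 0) (𝓝 z))
    (R : ℝ[X]) :
    Tendsto (fun ε => ∑' i, w i * (X * (1 - X) * R).eval (Real.exp (-(ε * ℓ i)))) (𝓝[>] 0)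
      (𝓝 (logMoment R)) := by
  refine tendsto_tsum_mul_eval_exp hw (fun k => ?_) R
  have hlim := ((hz.comp (tendsto_const_mul_nhdsGT_zero (by positivity : (0 : ℝ) < k + 1))).sub
    (hz.comp (tendsto_const_mul_nhdsGT_zero (by positivity : (0 : ℝ) < k + 2)))).add_const
      (Real.log (((k : ℝ) + 2) / (k + 1)))
  rw [sub_self, zero_add] at hlim
  refine hlim.congr' ?_
  filter_upwards [self_mem_nhdsWithin] with ε (hε : 0 < ε)
  simp only [Function.comp]
  rw [Real.log_mul (by positivity) hε.ne', Real.log_mul (by positivity) hε.ne',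
    Real.log_div (by positivity) (by positivity)]
  ring

theorem tendsto_tsum_mul_eval_exp_zero
    (hc : ∀ ε > 0, Summable fun i => c i * Real.exp (-(ε * ℓ i))) {L : ℝ}
    (hL : Tendsto (generalDirichletSeries ℓ c) (𝓝[>] 0) (𝓝 L)) (R : ℝ[X]) :
    Tendsto (fun ε => ∑' i, c i * (X * (1 - X) * R).eval (Real.exp (-(ε * ℓ i)))) (𝓝[>] 0)
      (𝓝 0) := by
  have hlim := tendsto_tsum_mul_eval_exp hc (m := fun _ => 0) (fun k => ?_) R
  · simpa [Polynomial.sum] using hlim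
  · simpa only [sub_self, Function.comp_def] using
      (hL.comp (tendsto_const_mul_nhdsGT_zero k.cast_add_one_pos)).sub
        (hL.comp (tendsto_const_mul_nhdsGT_zero (by positivity : (0 : ℝ) < k + 2)))

theorem summable_mul_exp_of_abs_le {C : ℝ} (hc : ∀ i, |c i| ≤ C * w i)
    (hw : Summable fun i => w i * Real.exp (-(ε * ℓ i))) :
    Summable fun i => c i * Real.exp (-(ε * ℓ i)) := by
  refine Summable.of_norm_bounded (hw.mul_left C) fun i => ?_
  rw [norm_mul, Real.norm_of_nonneg (Real.exp_pos _).le, ← mul_assoc]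
  exact mul_le_mul_of_nonneg_right (hc i) (Real.exp_pos _).le

theorem abs_tsum_indicator_sub_le {C : ℝ} (hℓ : ∀ i, 0 ≤ ℓ i) (hc : ∀ i, |c i| ≤ C * w i)
    (hw : ∀ ε > 0, Summable fun i => w i * Real.exp (-(ε * ℓ i)))
    {P₁ P₂ : ℝ[X]} (hP : ∀ t ∈ Set.Icc (0 : ℝ) 1,
      t + t * (1 - t) * P₁.eval t ≤ (Set.Ici (Real.exp (-1))).indicator 1 t ∧
      (Set.Ici (Real.exp (-1))).indicator 1 t ≤ t + t * (1 - t) * P₂.eval t ∧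
      P₁.eval t ≤ P₂.eval t) (hε : 0 < ε) :
    |∑' i, {i | ε * ℓ i ≤ 1}.indicator c i - (generalDirichletSeries ℓ c ε +
        ∑' i, c i * (X * (1 - X) * P₁).eval (Real.exp (-(ε * ℓ i))))| ≤
      C * ∑' i, w i * (X * (1 - X) * (P₂ - P₁)).eval (Real.exp (-(ε * ℓ i))) := by
  have hbound (i : ι) : ‖{i | ε * ℓ i ≤ 1}.indicator c i - (c i * Real.exp (-(ε * ℓ i)) +
      c i * (X * (1 - X) * P₁).eval (Real.exp (-(ε * ℓ i))))‖ ≤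
      C * (w i * (X * (1 - X) * (P₂ - P₁)).eval (Real.exp (-(ε * ℓ i)))) := by
    have hind : {i | ε * ℓ i ≤ 1}.indicator c i =
        c i * (Set.Ici (Real.exp (-1))).indicator 1 (Real.exp (-(ε * ℓ i))) := by
      simp [Set.indicator_apply]
    have ht : Real.exp (-(ε * ℓ i)) ∈ Set.Icc (0 : ℝ) 1 :=
      ⟨(Real.exp_pos _).le, Real.exp_le_one_iff.2 (neg_nonpos.2 (mul_nonneg hε.le (hℓ i)))⟩
    obtain ⟨hlow, hupp, -⟩ := hP _ ht
    have heval (R : ℝ[X]) (t : ℝ) : (X * (1 - X) * R).eval t = t * (1 - t) * R.eval t := by simp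
    rw [hind, heval, heval, eval_sub, ← mul_add, ← mul_sub, norm_mul,
      Real.norm_of_nonneg (sub_nonneg.2 hlow), ← mul_assoc]
    refine mul_le_mul (hc i) ?_ (sub_nonneg.2 hlow) ((abs_nonneg _).trans (hc i))
    linarith
  have hcsum := fun ε hε => summable_mul_exp_of_abs_le hc (hw ε hε)
  have hmaj := (hasSum_mul_eval_exp hw (P₂ - P₁) hε).summable.mul_left C
  have happrox := (hcsum ε hε).add (hasSum_mul_eval_exp hcsum P₁ hε).summable
  have hstep : Summable ({i | ε * ℓ i ≤ 1}.indicator c) := by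
    simpa using (Summable.of_norm_bounded hmaj hbound).add happrox
  have := tsum_of_norm_bounded hmaj.hasSum hbound
  rwa [hstep.tsum_sub happrox, (hcsum ε hε).tsum_add (hasSum_mul_eval_exp hcsum P₁ hε).summable,
    tsum_mul_left] at this

theorem tendsto_tsum_indicator_mul_le_one {C z L : ℝ} (hC : 0 < C) (hℓ : ∀ i, 0 ≤ ℓ i)
    (hc : ∀ i, |c i| ≤ C * w i)
    (hw : ∀ ε > 0, Summable fun i => w i * Real.exp (-(ε * ℓ i)))
    (hz : Tendsto (fun ε => generalDirichletSeries ℓ w ε + Real.log ε) (𝓝[>] 0) (𝓝 z))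
    (hL : Tendsto (generalDirichletSeries ℓ c) (𝓝[>] 0) (𝓝 L)) :
    Tendsto (fun ε => ∑' i, {i | ε * ℓ i ≤ 1}.indicator c i) (𝓝[>] 0) (𝓝 L) := by
  have hcsum := fun ε hε => summable_mul_exp_of_abs_le hc (hw ε hε)
  rw [Metric.tendsto_nhds]
  intro δ hδ
  obtain ⟨P₁, P₂, hP, hint⟩ := exists_polynomial_indicator_Ici_between (Real.exp_pos (-1))
    (Real.exp_lt_one_iff.2 neg_one_lt_zero) (by positivity : 0 < δ / (3 * C))
  have hmoment : logMoment (P₂ - P₁) < δ / (2 * C) := by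
    refine (logMoment_le_integral fun t ht => ?_).trans_lt (hint.trans_lt (by gcongr; norm_num))
    rw [eval_sub]
    exact sub_nonneg.2 (hP t ht).2.2
  have hmaj := (tendsto_tsum_mul_eval_exp_logMoment hw hz (P₂ - P₁)).eventually_lt_const hmoment
  have happrox := Metric.tendsto_nhds.1 (hL.add (tendsto_tsum_mul_eval_exp_zero hcsum hL P₁))
    _ (half_pos hδ)
  filter_upwards [hmaj, happrox, self_mem_nhdsWithin] with ε hmajε happroxε (hε : 0 < ε)
  rw [add_zero] at happroxε
  refine (dist_triangle _ _ _).trans_lt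
    ((add_lt_add_of_le_of_lt (abs_tsum_indicator_sub_le hℓ hc hw hP hε) happroxε).trans_le ?_)
  have := mul_le_mul_of_nonneg_left hmajε.le hC.le
  rw [← mul_div_assoc, mul_comm 2 C, mul_div_mul_left _ _ hC.ne'] at this
  linarith

theorem tendsto_tsum_indicator_le_atTop {C z L : ℝ} (hC : 0 < C) (hℓ : ∀ i, 0 ≤ ℓ i)
    (hc : ∀ i, |c i| ≤ C * w i)
    (hw : ∀ ε > 0, Summable fun i => w i * Real.exp (-(ε * ℓ i)))
    (hz : Tendsto (fun ε => generalDirichletSeries ℓ w ε + Real.log ε) (𝓝[>] 0) (𝓝 z))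
    (hL : Tendsto (generalDirichletSeries ℓ c) (𝓝[>] 0) (𝓝 L)) :
    Tendsto (fun x : ℝ => ∑' i, {i | ℓ i ≤ x}.indicator c i) atTop (𝓝 L) := by
  refine ((tendsto_tsum_indicator_mul_le_one hC hℓ hc hw hz hL).comp
    tendsto_inv_atTop_nhdsGT_zero).congr' ?_
  filter_upwards [eventually_gt_atTop 0] with x hx
  simp only [Function.comp, inv_mul_le_one₀ hx]

end Tauberian

section EulerProduct

open Topology

variable {a : ArithmeticFunction ℝ} {B : ℕ → ℝ} {p : ℕ} {s : ℝ}

/-- The Euler factor at `p` of the Dirichlet series `∑ a(n) n^{-s}`, at a real point `s`. -/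
noncomputable def eulerFactor (a : ArithmeticFunction ℝ) (p : ℕ) (s : ℝ) : ℝ :=
  ∑' e : ℕ, a (p ^ e) * ((p ^ e : ℕ) : ℝ) ^ (-s)

theorem abs_log_one_add_add_sub_le {x y : ℝ} (hx : 0 ≤ x) (hy : 0 ≤ y) :
    |Real.log (1 + (x + y)) - x| ≤ (x + y) ^ 2 + y := by
  have hpos : 0 < 1 + (x + y) := by positivity
  have hupper := Real.log_le_sub_one_of_pos hpos
  have hlower : x + y - (x + y) ^ 2 ≤ Real.log (1 + (x + y)) := by
    refine le_trans ?_ (Real.one_sub_inv_le_log_of_pos hpos)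
    rw [inv_eq_one_div, one_sub_div hpos.ne', le_div_iff₀ hpos]
    nlinarith [pow_nonneg (add_nonneg hx hy) 3]
  rw [abs_le]
  constructor <;> nlinarith [sq_nonneg (x + y)]

theorem tendsto_const_rpow_neg_nhdsGT {x : ℝ} (hx : 0 < x) (s : ℝ) :
    Tendsto (fun t : ℝ => x ^ (-t)) (𝓝[>] s) (𝓝 (x ^ (-s))) :=
  ((Real.continuous_const_rpow hx.ne').comp continuous_neg).continuousWithinAt

theorem term_eulerFactor_le (h0 : ∀ n, 0 ≤ a n) (haB : ∀ p e : ℕ, p.Prime → a (p ^ e) ≤ B e)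
    (hp : p.Prime) (hs : 1 ≤ s) (e : ℕ) :
    a (p ^ e) * ((p ^ e : ℕ) : ℝ) ^ (-s) ≤ B e * (1 / 2) ^ e * (2 / p) ^ e := by
  have hpow : ((p ^ e : ℕ) : ℝ) ^ (-s) ≤ (1 / 2) ^ e * (2 / p) ^ e := by
    calc ((p ^ e : ℕ) : ℝ) ^ (-s) ≤ ((p ^ e : ℕ) : ℝ) ^ (-1 : ℝ) :=
          Real.rpow_le_rpow_of_exponent_le (mod_cast Nat.one_le_pow _ _ hp.pos) (by linarith)
      _ = (1 / 2) ^ e * (2 / p) ^ e := by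
          rw [Real.rpow_neg_one, ← mul_pow]
          push_cast
          rw [← inv_pow]
          congr 1
          ring
  rw [mul_assoc]
  exact mul_le_mul (haB p e hp) hpow (by positivity) ((h0 _).trans (haB p e hp))

theorem summable_eulerFactor (h0 : ∀ n, 0 ≤ a n) (hB : Summable fun e => B e * (1 / 2) ^ e)
    (haB : ∀ p e : ℕ, p.Prime → a (p ^ e) ≤ B e) (hp : p.Prime) (hs : 1 ≤ s) :
    Summable fun e : ℕ => a (p ^ e) * ((p ^ e : ℕ) : ℝ) ^ (-s) := by
  have hB0 (e : ℕ) : 0 ≤ B e := (h0 _).trans (haB p e hp)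
  refine hB.of_nonneg_of_le (fun e => mul_nonneg (h0 _) (by positivity)) fun e =>
    (term_eulerFactor_le h0 haB hp hs e).trans ?_
  refine mul_le_of_le_one_right (mul_nonneg (hB0 e) (by positivity)) ?_
  exact pow_le_one₀ (by positivity) ((div_le_one (mod_cast hp.pos)).2 (mod_cast hp.two_le))

theorem tsum_eulerFactor_tail_le (h0 : ∀ n, 0 ≤ a n)
    (hB : Summable fun e => B e * (1 / 2) ^ e)
    (haB : ∀ p e : ℕ, p.Prime → a (p ^ e) ≤ B e) (hp : p.Prime) (hs : 1 ≤ s) (m : ℕ) :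
    ∑' e : ℕ, a (p ^ (e + m)) * ((p ^ (e + m) : ℕ) : ℝ) ^ (-s) ≤
      (∑' e, B e * (1 / 2) ^ e) * (2 / p) ^ m := by
  have hB0 (e : ℕ) : 0 ≤ B e * (1 / 2) ^ e :=
    mul_nonneg ((h0 _).trans (haB p e hp)) (by positivity)
  have hp2 : 2 / (p : ℝ) ≤ 1 := (div_le_one (mod_cast hp.pos)).2 (mod_cast hp.two_le)
  calc ∑' e : ℕ, a (p ^ (e + m)) * ((p ^ (e + m) : ℕ) : ℝ) ^ (-s)
      ≤ ∑' e : ℕ, B (e + m) * (1 / 2) ^ (e + m) * (2 / p) ^ m := by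
        refine ((summable_nat_add_iff m).2 (summable_eulerFactor h0 hB haB hp hs)).tsum_le_tsum
          (fun e => (term_eulerFactor_le h0 haB hp hs (e + m)).trans ?_)
          (((summable_nat_add_iff m).2 hB).mul_right _)
        exact mul_le_mul_of_nonneg_left
          (pow_le_pow_of_le_one (by positivity) hp2 (Nat.le_add_left m e)) (hB0 _)
    _ = (∑' e : ℕ, B (e + m) * (1 / 2) ^ (e + m)) * (2 / p) ^ m := tsum_mul_right
    _ ≤ (∑' e, B e * (1 / 2) ^ e) * (2 / p) ^ m := by
        refine mul_le_mul_of_nonneg_right ?_ (by positivity)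
        exact (le_add_of_nonneg_left (Finset.sum_nonneg fun e _ => hB0 e)).trans_eq
          (hB.sum_add_tsum_nat_add m)

theorem one_le_eulerFactor (ha : a.IsMultiplicative) (h0 : ∀ n, 0 ≤ a n)
    (hB : Summable fun e => B e * (1 / 2) ^ e)
    (haB : ∀ p e : ℕ, p.Prime → a (p ^ e) ≤ B e) (hp : p.Prime) (hs : 1 ≤ s) :
    1 ≤ eulerFactor a p s := by
  simpa [eulerFactor, ha.1] using (summable_eulerFactor h0 hB haB hp hs).le_tsum 0
    fun e _ => mul_nonneg (h0 _) (by positivity)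

theorem abs_log_eulerFactor_sub_le (ha : a.IsMultiplicative) (h0 : ∀ n, 0 ≤ a n)
    (hB : Summable fun e => B e * (1 / 2) ^ e)
    (haB : ∀ p e : ℕ, p.Prime → a (p ^ e) ≤ B e) (hp : p.Prime) (hs : 1 ≤ s) :
    |Real.log (eulerFactor a p s) - a p * (p : ℝ) ^ (-s)| ≤
      ((∑' e, B e * (1 / 2) ^ e) ^ 2 + ∑' e, B e * (1 / 2) ^ e) * (2 / p) ^ 2 := by
  have hterm (e : ℕ) : 0 ≤ a (p ^ e) * ((p ^ e : ℕ) : ℝ) ^ (-s) := mul_nonneg (h0 _) (by positivity)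
  have hsum := summable_eulerFactor h0 hB haB hp hs
  have htail (m : ℕ) := tsum_eulerFactor_tail_le h0 hB haB hp hs m
  set S := ∑' e, B e * (1 / 2) ^ e
  set x := a p * (p : ℝ) ^ (-s)
  set y := ∑' e : ℕ, a (p ^ (e + 2)) * ((p ^ (e + 2) : ℕ) : ℝ) ^ (-s)
  have hx0 : 0 ≤ x := by simpa using hterm 1
  have hy0 : 0 ≤ y := tsum_nonneg fun e => hterm _
  have hxy : x + y = ∑' e : ℕ, a (p ^ (e + 1)) * ((p ^ (e + 1) : ℕ) : ℝ) ^ (-s) := by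
    rw [((summable_nat_add_iff 1).2 hsum).tsum_eq_zero_add]
    simp [x, y]
  have heuler : eulerFactor a p s = 1 + (x + y) := by
    rw [hxy, eulerFactor, hsum.tsum_eq_zero_add]
    simp [ha.1]
  rw [heuler]
  calc |Real.log (1 + (x + y)) - x| ≤ (x + y) ^ 2 + y := abs_log_one_add_add_sub_le hx0 hy0
    _ ≤ (S * (2 / p) ^ 1) ^ 2 + S * (2 / p) ^ 2 := by
        gcongr
        · exact hxy.le.trans (htail 1)
        · exact htail 2
    _ = (S ^ 2 + S) * (2 / p) ^ 2 := by ring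

theorem tendsto_eulerFactor_nhdsGT_one (h0 : ∀ n, 0 ≤ a n)
    (hB : Summable fun e => B e * (1 / 2) ^ e)
    (haB : ∀ p e : ℕ, p.Prime → a (p ^ e) ≤ B e) (hp : p.Prime) :
    Tendsto (eulerFactor a p) (𝓝[>] 1) (𝓝 (eulerFactor a p 1)) := by
  refine tendsto_tsum_of_dominated_convergence (summable_eulerFactor h0 hB haB hp le_rfl)
    (fun e => (tendsto_const_rpow_neg_nhdsGT (mod_cast pow_pos hp.pos e) 1).const_mul _) ?_
  filter_upwards [self_mem_nhdsWithin] with s (hs : 1 < s) e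
  rw [Real.norm_of_nonneg (mul_nonneg (h0 _) (by positivity))]
  have : (1 : ℝ) ≤ (p ^ e : ℕ) := mod_cast Nat.one_le_pow _ _ hp.pos
  gcongr
  exact h0 _

theorem summable_const_mul_two_div_primes_sq (C : ℝ) :
    Summable fun p : Nat.Primes => C * (2 / (p : ℝ)) ^ 2 := by
  have := (Nat.Primes.summable_rpow.2 (by norm_num : (-2 : ℝ) < -1)).mul_left (C * 4)
  refine this.congr fun p => ?_
  rw [Real.rpow_neg (Nat.cast_nonneg _), Real.rpow_two]
  ring

theorem tendsto_tsum_log_eulerFactor_sub (ha : a.IsMultiplicative) (h0 : ∀ n, 0 ≤ a n)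
    (hB : Summable fun e => B e * (1 / 2) ^ e)
    (haB : ∀ p e : ℕ, p.Prime → a (p ^ e) ≤ B e) :
    Tendsto (fun s => ∑' p : Nat.Primes, (Real.log (eulerFactor a p s) - a p * (p : ℝ) ^ (-s)))
      (𝓝[>] 1)
      (𝓝 (∑' p : Nat.Primes, (Real.log (eulerFactor a p 1) - a p * (p : ℝ) ^ (-1 : ℝ)))) := by
  refine tendsto_tsum_of_dominated_convergence (summable_const_mul_two_div_primes_sq
      ((∑' e, B e * (1 / 2) ^ e) ^ 2 + ∑' e, B e * (1 / 2) ^ e))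
    (fun p => ((tendsto_eulerFactor_nhdsGT_one h0 hB haB p.2).log ?_).sub
      ((tendsto_const_rpow_neg_nhdsGT (mod_cast p.2.pos) 1).const_mul _)) ?_
  · exact (zero_lt_one.trans_le (one_le_eulerFactor ha h0 hB haB p.2 le_rfl)).ne'
  · filter_upwards [self_mem_nhdsWithin] with s (hs : 1 < s) p
    exact abs_log_eulerFactor_sub_le ha h0 hB haB p.2 hs.le

theorem hasSum_log_eulerFactor (ha : a.IsMultiplicative) (h0 : ∀ n, 0 ≤ a n)
    (hB : Summable fun e => B e * (1 / 2) ^ e)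
    (haB : ∀ p e : ℕ, p.Prime → a (p ^ e) ≤ B e) (hs : 1 ≤ s)
    (hpos : 0 < ∑' n : ℕ, a n * (n : ℝ) ^ (-s)) :
    HasSum (fun p : Nat.Primes => Real.log (eulerFactor a p s))
      (Real.log (∑' n : ℕ, a n * (n : ℝ) ^ (-s))) := by
  have hsum : Summable fun n : ℕ => a n * (n : ℝ) ^ (-s) := by
    by_contra h
    exact hpos.ne' (tsum_eq_zero_of_not_summable h)
  have hprod : HasProd (fun p : Nat.Primes => eulerFactor a p s) (∑' n : ℕ, a n * (n : ℝ) ^ (-s)) :=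
    EulerProduct.eulerProduct_hasProd (f := fun n : ℕ => a n * (n : ℝ) ^ (-s)) (by simp [ha.1])
      (fun {m n} hmn => by
        rw [ha.2 hmn, Nat.cast_mul, Real.mul_rpow m.cast_nonneg n.cast_nonneg, mul_mul_mul_comm])
      hsum.norm (by simp)
  refine ((Real.continuousAt_log hpos.ne').tendsto.comp hprod).congr fun t => ?_
  exact Real.log_prod fun p _ =>
    (zero_lt_one.trans_le (one_le_eulerFactor ha h0 hB haB p.2 hs)).ne'

theorem div_mul_exp_neg_mul_log (x : ℝ) {y : ℝ} (hy : 0 < y) (ε : ℝ) :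
    x / y * Real.exp (-(ε * Real.log y)) = x * y ^ (-(1 + ε)) := by
  rw [neg_add, Real.rpow_add hy, Real.rpow_neg_one, Real.rpow_def_of_pos hy]
  ring_nf

theorem summable_primes_div_mul_exp (h0 : ∀ n, 0 ≤ a n)
    (haB : ∀ p e : ℕ, p.Prime → a (p ^ e) ≤ B e) {ε : ℝ} (hε : 0 < ε) :
    Summable fun p : Nat.Primes => a p / p * Real.exp (-(ε * Real.log p)) := by
  have := (Nat.Primes.summable_rpow.2 (by linarith : -(1 + ε) < -1)).mul_left (B 1)
  refine this.of_nonneg_of_le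
    (fun p => mul_nonneg (div_nonneg (h0 _) (Nat.cast_nonneg _)) (Real.exp_pos _).le) fun p => ?_
  rw [div_mul_exp_neg_mul_log _ (mod_cast p.2.pos)]
  gcongr
  simpa using haB p 1 p.2

theorem exists_tendsto_primes_add_log (ha : a.IsMultiplicative) (h0 : ∀ n, 0 ≤ a n)
    (hB : Summable fun e => B e * (1 / 2) ^ e)
    (haB : ∀ p e : ℕ, p.Prime → a (p ^ e) ≤ B e) {κ : ℝ} (hκ : 0 < κ)
    (hres : Tendsto (fun s : ℝ => (s - 1) * ∑' n : ℕ, a n * (n : ℝ) ^ (-s)) (𝓝[>] 1) (𝓝 κ)) :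
    ∃ z, Tendsto (fun ε => generalDirichletSeries (fun p : Nat.Primes => Real.log p)
      (fun p => a p / p) ε + Real.log ε) (𝓝[>] 0) (𝓝 z) := by
  have hlim := (hres.log hκ.ne').sub (tendsto_tsum_log_eulerFactor_sub ha h0 hB haB)
  have hshift : Tendsto (fun ε : ℝ => 1 + ε) (𝓝[>] 0) (𝓝[>] 1) := by
    simpa only [Tendsto, add_zero] using (map_add_left_nhdsGT (c := (1 : ℝ)) (a := 0)).le
  refine ⟨_, (hlim.comp hshift).congr' ?_⟩
  filter_upwards [self_mem_nhdsWithin, hshift.eventually (hres.eventually_const_lt hκ)]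
    with ε (hε : 0 < ε) hpos
  rw [add_sub_cancel_left] at hpos
  replace hpos := pos_of_mul_pos_right hpos hε.le
  have hs : 1 ≤ 1 + ε := by linarith
  have hlog := hasSum_log_eulerFactor ha h0 hB haB hs hpos
  have herror : Summable fun p : Nat.Primes =>
      Real.log (eulerFactor a p (1 + ε)) - a p * (p : ℝ) ^ (-(1 + ε)) :=
    .of_norm_bounded (summable_const_mul_two_div_primes_sq _) fun p =>
      abs_log_eulerFactor_sub_le ha h0 hB haB p.2 hs
  have hseries : generalDirichletSeries (fun p : Nat.Primes => Real.log p) (fun p => a p / p) ε =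
      ∑' p : Nat.Primes, a p * (p : ℝ) ^ (-(1 + ε)) :=
    tsum_congr fun p => div_mul_exp_neg_mul_log _ (mod_cast p.2.pos) ε
  simp only [Function.comp, add_sub_cancel_left]
  rw [hseries, Real.log_mul hε.ne' hpos.ne', ← hlog.tsum_eq, add_sub_assoc,
    ← hlog.summable.tsum_sub herror, add_comm]
  simp only [sub_sub_cancel]

end EulerProduct

section PrimeSum

open Topology

variable {a : ArithmeticFunction ℝ} {B : ℕ → ℝ}

theorem tsum_primes_indicator_eq_sum (g : ℕ → ℝ) (N : ℕ) :
    ∑' p : Nat.Primes, {p : Nat.Primes | (p : ℕ) ≤ N}.indicator (fun p => g p) p =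
      ∑ p ∈ (Finset.range (N + 1)).filter Nat.Prime, g p := by
  calc ∑' p : Nat.Primes, {p : Nat.Primes | (p : ℕ) ≤ N}.indicator (fun p => g p) p
      = ∑' p : {n : ℕ | n.Prime}, {n : ℕ | n ≤ N}.indicator g p := rfl
    _ = ∑' n : ℕ, {n : ℕ | n.Prime}.indicator ({n : ℕ | n ≤ N}.indicator g) n := tsum_subtype _ _
    _ = ∑ p ∈ (Finset.range (N + 1)).filter Nat.Prime, g p := by
        rw [sum_eq_tsum_indicator]
        refine tsum_congr fun n => ?_
        rw [Set.indicator_indicator]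
        congr 1
        ext
        simp [and_comm]

theorem tendsto_sub_one_mul_tsum_zeta :
    Tendsto (fun s : ℝ => (s - 1) * ∑' n : ℕ,
      (ArithmeticFunction.zeta : ArithmeticFunction ℝ) n * (n : ℝ) ^ (-s)) (𝓝[>] 1) (𝓝 1) := by
  refine tendsto_sub_mul_tsum_nat_rpow.congr' ?_
  filter_upwards [self_mem_nhdsWithin] with s (hs : 1 < s)
  congr 1
  refine tsum_congr fun n => ?_
  rcases eq_or_ne n 0 with rfl | hn
  · simp [(zero_lt_one.trans hs).ne']
  · simp [ArithmeticFunction.natCoe_apply, hn, Real.rpow_neg]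

theorem abs_sub_one_div_le {x b y : ℝ} (hx : 0 ≤ x) (hxb : x ≤ b) (hy : 0 ≤ y) :
    |(x - 1) / y| ≤ (b + 1) * (1 / y) := by
  rw [abs_div, abs_of_nonneg hy, div_eq_mul_one_div]
  refine mul_le_mul_of_nonneg_right ?_ (by positivity)
  rw [abs_le]
  constructor <;> linarith

theorem exists_tendsto_primes_sub_one (ha : a.IsMultiplicative) (h0 : ∀ n, 0 ≤ a n)
    (hB : Summable fun e => B e * (1 / 2) ^ e)
    (haB : ∀ p e : ℕ, p.Prime → a (p ^ e) ≤ B e) {κ : ℝ} (hκ : 0 < κ)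
    (hres : Tendsto (fun s : ℝ => (s - 1) * ∑' n : ℕ, a n * (n : ℝ) ^ (-s)) (𝓝[>] 1) (𝓝 κ)) :
    ∃ L : ℝ, Tendsto (fun x : ℝ => ∑' p : Nat.Primes,
      {p : Nat.Primes | Real.log p ≤ x}.indicator (fun p => (a p - 1) / p) p) atTop (𝓝 L) := by
  let ζ : ArithmeticFunction ℝ := ArithmeticFunction.zeta
  have hζ0 (n : ℕ) : 0 ≤ ζ n := by simp only [ζ, ArithmeticFunction.natCoe_apply]; positivity
  have hζpow (p e : ℕ) (hp : p.Prime) : ζ (p ^ e) = 1 := by simp [ζ, hp.ne_zero]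
  have hζle (p e : ℕ) (hp : p.Prime) : ζ (p ^ e) ≤ 1 := (hζpow p e hp).le
  have hζp (p : Nat.Primes) : ζ p = 1 := by simpa using hζpow p 1 p.2
  have hgeom : Summable fun e : ℕ => (1 : ℝ) * (1 / 2) ^ e := by
    simpa using summable_geometric_two
  have hsum {ε : ℝ} (hε : 0 < ε) := summable_primes_div_mul_exp h0 haB hε
  have hζsum {ε : ℝ} (hε : 0 < ε) := summable_primes_div_mul_exp hζ0 hζle hε
  obtain ⟨z, hz⟩ := exists_tendsto_primes_add_log ha h0 hB haB hκ hres
  obtain ⟨zζ, hzζ⟩ := exists_tendsto_primes_add_log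
    ArithmeticFunction.isMultiplicative_zeta.natCast hζ0 hgeom hζle one_pos
    tendsto_sub_one_mul_tsum_zeta
  have hB1 : 0 ≤ B 1 := (h0 _).trans (haB 2 1 Nat.prime_two)
  simp only [ζ, hζp] at hζsum hzζ
  refine ⟨z - zζ, tendsto_tsum_indicator_le_atTop (C := B 1 + 1) (by positivity)
    (fun p => Real.log_natCast_nonneg p)
    (fun p => abs_sub_one_div_le (h0 p) (by simpa using haB p 1 p.2) (Nat.cast_nonneg _))
    (fun _ => hζsum) hzζ ((hz.sub hzζ).congr' ?_)⟩
  filter_upwards [self_mem_nhdsWithin] with ε (hε : 0 < ε)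
  rw [add_sub_add_right_eq_sub, generalDirichletSeries, generalDirichletSeries,
    ← (hsum hε).tsum_sub (hζsum hε)]
  simp only [generalDirichletSeries, ← sub_mul, ← sub_div]

theorem exists_tendsto_sum_primes_sub_one_div (ha : a.IsMultiplicative) (h0 : ∀ n, 0 ≤ a n)
    (hB : Summable fun e => B e * (1 / 2) ^ e)
    (haB : ∀ p e : ℕ, p.Prime → a (p ^ e) ≤ B e) {κ : ℝ} (hκ : 0 < κ)
    (hres : Tendsto (fun s : ℝ => (s - 1) * ∑' n : ℕ, a n * (n : ℝ) ^ (-s)) (𝓝[>] 1) (𝓝 κ)) :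
    ∃ L : ℝ, Tendsto (fun N : ℕ => ∑ p ∈ (Finset.range (N + 1)).filter Nat.Prime, (a p - 1) / p)
      atTop (𝓝 L) := by
  obtain ⟨L, hL⟩ := exists_tendsto_primes_sub_one ha h0 hB haB hκ hres
  refine ⟨L, (hL.comp (Real.tendsto_log_atTop.comp tendsto_natCast_atTop_atTop)).congr' ?_⟩
  filter_upwards [eventually_gt_atTop 0] with N hN
  rw [← tsum_primes_indicator_eq_sum (fun p => (a p - 1) / p)]
  have hlog (p : Nat.Primes) : Real.log p ≤ Real.log N ↔ (p : ℕ) ≤ N := by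
    rw [Real.log_le_log_iff (mod_cast p.2.pos) (mod_cast hN), Nat.cast_le]
  simp only [Function.comp, hlog]

end PrimeSum

section IdealCount

open Ideal UniqueFactorizationMonoid

variable {S : Type*} [CommRing S] [IsDedekindDomain S] [Module.Free ℤ S]
  {I J : Ideal S} {m n p e : ℕ}

variable (S) in
/-- The number of ideals of norm `n`, as an arithmetic function. The zero ideal has norm `0`, but
an arithmetic function must vanish at `0`, so it is not counted. -/
noncomputable def idealCount : ArithmeticFunction ℕ :=
  ⟨fun n => if n = 0 then 0 else Nat.card {I : Ideal S // absNorm I = n}, if_pos rfl⟩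

theorem idealCount_apply (hn : n ≠ 0) :
    idealCount S n = Nat.card {I : Ideal S // absNorm I = n} :=
  if_neg hn

theorem span_natCast_sup_span_natCast {R : Type*} [CommRing R] (h : m.Coprime n) :
    span {(m : R)} ⊔ span {(n : R)} = ⊤ :=
  isCoprime_iff_sup_eq.1 ((isCoprime_span_singleton_iff _ _).2 h.cast)

theorem mul_sup_span_natCast {R : Type*} [CommRing R] {I J : Ideal R} (h : m.Coprime n)
    (hI : (m : R) ∈ I) (hJ : (n : R) ∈ J) : I * J ⊔ span {(m : R)} = I := by
  have hcop : J ⊔ span {(m : R)} = ⊤ := by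
    rw [eq_top_iff, ← span_natCast_sup_span_natCast h, sup_le_iff]
    exact ⟨le_sup_right, ((span_singleton_le_iff_mem _).2 hJ).trans le_sup_left⟩
  rw [mul_sup_eq_of_coprime_right hcop, sup_eq_left, span_singleton_le_iff_mem]
  exact hI

theorem sup_span_natCast_mul_sup_span_natCast {R : Type*} [CommRing R] {I : Ideal R}
    (h : m.Coprime n) (hI : ((m * n : ℕ) : R) ∈ I) :
    (I ⊔ span {(m : R)}) * (I ⊔ span {(n : R)}) = I := by
  have hcop : (I ⊔ span {(m : R)}) ⊔ (I ⊔ span {(n : R)}) = ⊤ := by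
    rw [← sup_sup_distrib_left, span_natCast_sup_span_natCast h, sup_top_eq]
  refine le_antisymm ?_ ?_
  · rw [Ideal.sup_mul, Ideal.mul_sup, Ideal.mul_sup, span_singleton_mul_span_singleton]
    exact sup_le (sup_le mul_le_left mul_le_left)
      (sup_le mul_le_right ((span_singleton_le_iff_mem _).2 (by exact_mod_cast hI)))
  · rw [mul_eq_inf_of_coprime hcop]
    exact le_inf le_sup_left le_sup_left

theorem ne_zero_of_absNorm_eq_pow (hp : p.Prime) (hI : absNorm I = p ^ e) : I ≠ 0 := by
  rintro rfl
  rw [map_zero] at hI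
  exact pow_ne_zero e hp.ne_zero hI.symm

theorem le_absNorm_of_mem_normalizedFactors (hp : p.Prime) (hI : absNorm I = p ^ e)
    (hJ : J ∈ normalizedFactors I) : p ≤ absNorm J := by
  obtain ⟨k, -, hk⟩ := (Nat.dvd_prime_pow hp).1
    (hI ▸ map_dvd absNorm (dvd_of_mem_normalizedFactors hJ))
  rw [hk]
  refine Nat.le_self_pow ?_ p
  rintro rfl
  rw [pow_zero, absNorm_eq_one_iff] at hk
  exact (prime_of_normalized_factor J hJ).not_isUnit (Ideal.isUnit_iff.2 hk)

theorem card_normalizedFactors_le_of_absNorm_eq_pow (hp : p.Prime) (hI : absNorm I = p ^ e) :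
    Multiset.card (normalizedFactors I) ≤ e := by
  rw [← Nat.pow_le_pow_iff_right hp.one_lt]
  calc p ^ Multiset.card (normalizedFactors I)
      ≤ ((normalizedFactors I).map absNorm).prod := by
        rw [← Multiset.card_map absNorm]
        refine Multiset.pow_card_le_prod fun x hx => ?_
        obtain ⟨J, hJ, rfl⟩ := Multiset.mem_map.1 hx
        exact le_absNorm_of_mem_normalizedFactors hp hI hJ
    _ = p ^ e := by
        rw [Multiset.prod_hom,
          Ideal.prod_normalizedFactors_eq_self (ne_zero_of_absNorm_eq_pow hp hI), hI]

variable [Module.Finite ℤ S]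

theorem coprime_absNorm_sup_span_natCast (h : m.Coprime n) (I : Ideal S) :
    (absNorm (I ⊔ span {(m : S)})).Coprime n := by
  have hdvd : absNorm (I ⊔ span {(m : S)}) ∣ m ^ Module.finrank ℤ S :=
    absNorm_span_natCast (S := S) m ▸ absNorm_dvd_absNorm_of_le le_sup_right
  exact (h.pow_left _).coprime_dvd_left hdvd

theorem absNorm_sup_span_natCast (h : m.Coprime n) (hI : absNorm I = m * n) :
    absNorm (I ⊔ span {(m : S)}) = m := by
  have hmul : absNorm (I ⊔ span {(m : S)}) * absNorm (I ⊔ span {(n : S)}) = m * n := by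
    have hmem : ((m * n : ℕ) : S) ∈ I := hI ▸ absNorm_mem I
    rw [← map_mul, sup_span_natCast_mul_sup_span_natCast h hmem, hI]
  exact Nat.dvd_antisymm
    ((coprime_absNorm_sup_span_natCast h I).dvd_of_dvd_mul_right (Dvd.intro _ hmul))
    ((coprime_absNorm_sup_span_natCast h.symm I).symm.dvd_of_dvd_mul_right (Dvd.intro _ hmul.symm))

/-- For coprime `m` and `n`, an ideal of norm `m * n` is uniquely a product of an ideal of norm `m`
and an ideal of norm `n`. -/
noncomputable def idealsOfNormMulEquiv (h : m.Coprime n) :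
    {I : Ideal S // absNorm I = m * n} ≃
      {I : Ideal S // absNorm I = m} × {I : Ideal S // absNorm I = n} where
  toFun I := ⟨⟨_, absNorm_sup_span_natCast h I.2⟩,
    ⟨_, absNorm_sup_span_natCast h.symm (I.2.trans (mul_comm m n))⟩⟩
  invFun IJ := ⟨IJ.1 * IJ.2, by rw [map_mul, IJ.1.2, IJ.2.2]⟩
  left_inv I := by
    have hI : ((m * n : ℕ) : S) ∈ I.1 := by simpa only [I.2] using absNorm_mem I.1
    exact Subtype.ext (sup_span_natCast_mul_sup_span_natCast h hI)
  right_inv IJ := by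
    have hI : (m : S) ∈ IJ.1.1 := by simpa only [IJ.1.2] using absNorm_mem IJ.1.1
    have hJ : (n : S) ∈ IJ.2.1 := by simpa only [IJ.2.2] using absNorm_mem IJ.2.1
    refine Prod.ext (Subtype.ext (mul_sup_span_natCast h hI hJ)) (Subtype.ext ?_)
    exact (congrArg (· ⊔ _) (mul_comm _ _)).trans (mul_sup_span_natCast h.symm hJ hI)

variable (S) in
theorem isMultiplicative_idealCount : (idealCount S).IsMultiplicative := by
  refine ArithmeticFunction.IsMultiplicative.iff_ne_zero.2 ⟨?_, fun {m n} hm hn h => ?_⟩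
  · simp [idealCount_apply one_ne_zero, absNorm_eq_one_iff]
  · rw [idealCount_apply hm, idealCount_apply hn, idealCount_apply (mul_ne_zero hm hn),
      ← Nat.card_prod]
    exact Nat.card_congr (idealsOfNormMulEquiv h)

theorem mem_normalizedFactors_span_natCast (hp : p.Prime) (hI : absNorm I = p ^ e)
    (hJ : J ∈ normalizedFactors I) : J ∈ normalizedFactors (span {(p : S)}) := by
  have hp0 : span {(p : S)} ≠ ⊥ :=
    ne_zero_of_absNorm_eq_pow hp (absNorm_span_natCast p)
  have hprime : J.IsPrime := isPrime_of_prime (prime_of_normalized_factor J hJ)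
  have hmem : ((p ^ e : ℕ) : S) ∈ J :=
    le_of_dvd (dvd_of_mem_normalizedFactors hJ) (hI ▸ absNorm_mem I)
  rw [Ideal.mem_normalizedFactors_iff hp0, span_singleton_le_iff_mem]
  exact ⟨hprime, hprime.mem_of_pow_mem e (by exact_mod_cast hmem)⟩

/- An ideal of norm `p ^ e` is determined by the exponents, at most `e`, of the at most
`finrank ℤ S` primes above `p`. -/
variable (S) in
theorem idealCount_prime_pow_le (hp : p.Prime) (e : ℕ) :
    idealCount S (p ^ e) ≤ (e + 1) ^ Module.finrank ℤ S := by
  classical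
  let P := (normalizedFactors (span {(p : S)})).toFinset
  have hP : P.card ≤ Module.finrank ℤ S := (Multiset.toFinset_card_le _).trans
    (card_normalizedFactors_le_of_absNorm_eq_pow hp (absNorm_span_natCast p))
  let exponents (I : {I : Ideal S // absNorm I = p ^ e}) (J : P) : Fin (e + 1) :=
    ⟨(normalizedFactors I.1).count J.1, Nat.lt_succ_of_le
      ((Multiset.count_le_card _ _).trans (card_normalizedFactors_le_of_absNorm_eq_pow hp I.2))⟩
  have hcount {I : Ideal S} (hI : absNorm I = p ^ e) {J : Ideal S} (hJ : J ∉ P) :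
      (normalizedFactors I).count J = 0 := Multiset.count_eq_zero_of_notMem fun h =>
    hJ (Multiset.mem_toFinset.2 (mem_normalizedFactors_span_natCast hp hI h))
  have hinj : Function.Injective exponents := by
    rintro ⟨I, hI⟩ ⟨I', hI'⟩ h
    have hfactors : normalizedFactors I = normalizedFactors I' := by
      ext J
      by_cases hJ : J ∈ P
      · exact congrArg Fin.val (congrFun h ⟨J, hJ⟩)
      · rw [hcount hI hJ, hcount hI' hJ]
    refine Subtype.ext (?_ : I = I')
    rw [← Ideal.prod_normalizedFactors_eq_self (ne_zero_of_absNorm_eq_pow hp hI), hfactors,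
      Ideal.prod_normalizedFactors_eq_self (ne_zero_of_absNorm_eq_pow hp hI')]
  calc idealCount S (p ^ e) = Nat.card {I : Ideal S // absNorm I = p ^ e} :=
        idealCount_apply (pow_ne_zero e hp.ne_zero)
    _ ≤ Nat.card (P → Fin (e + 1)) := Nat.card_le_card_of_injective exponents hinj
    _ = (e + 1) ^ P.card := by simp
    _ ≤ (e + 1) ^ Module.finrank ℤ S := Nat.pow_le_pow_right e.succ_pos hP

end IdealCount

section DedekindZeta

open NumberField Topology

variable (K : Type*) [Field K] [NumberField K]

theorem dedekindZeta_ofReal {s : ℝ} :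
    dedekindZeta K s = ((∑' n : ℕ, (idealCount (𝓞 K) n : ℝ) * (n : ℝ) ^ (-s) : ℝ) : ℂ) := by
  rw [Complex.ofReal_tsum, dedekindZeta, LSeries]
  refine tsum_congr fun n => ?_
  rcases eq_or_ne n 0 with rfl | hn
  · simp
  · rw [LSeries.term_of_ne_zero hn, idealCount_apply hn, Real.rpow_neg n.cast_nonneg,
      div_eq_mul_inv]
    push_cast
    rw [Complex.ofReal_cpow n.cast_nonneg, Complex.ofReal_natCast]

theorem tendsto_sub_one_mul_tsum_idealCount :
    Tendsto (fun s : ℝ => (s - 1) * ∑' n : ℕ, (idealCount (𝓞 K) n : ℝ) * (n : ℝ) ^ (-s))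
      (𝓝[>] 1) (𝓝 (dedekindZeta_residue K)) := by
  have hre := (Complex.continuous_re.tendsto _).comp (tendsto_sub_one_mul_dedekindZeta_nhdsGT K)
  refine hre.congr fun s => ?_
  rw [Function.comp, dedekindZeta_ofReal]
  norm_cast

theorem summable_add_one_pow_mul_half_pow (d : ℕ) :
    Summable fun e : ℕ => ((e : ℝ) + 1) ^ d * (1 / 2) ^ e := by
  have hgeom := (summable_nat_add_iff 1).2
    (summable_pow_mul_geometric_of_norm_lt_one d (r := (1 / 2 : ℝ)) (by norm_num))
  refine (hgeom.mul_left 2).congr fun e => ?_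
  push_cast
  ring

theorem exists_tendsto_sum_primes_idealCount_sub_one_div :
    ∃ L : ℝ, Tendsto (fun N : ℕ => ∑ p ∈ (Finset.range (N + 1)).filter Nat.Prime,
      ((idealCount (𝓞 K) p : ℝ) - 1) / p) atTop (𝓝 L) :=
  exists_tendsto_sum_primes_sub_one_div (a := (idealCount (𝓞 K) : ArithmeticFunction ℝ))
    (isMultiplicative_idealCount (𝓞 K)).natCast (fun n => Nat.cast_nonneg _)
    (summable_add_one_pow_mul_half_pow (Module.finrank ℤ (𝓞 K)))
    (fun p e hp => by
      rw [ArithmeticFunction.natCoe_apply]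
      exact_mod_cast idealCount_prime_pow_le (𝓞 K) hp e)
    (dedekindZeta_residue_pos K) (tendsto_sub_one_mul_tsum_idealCount K)

end DedekindZeta

section ExtendHom

open Polynomial

variable {R A T : Type*} [CommRing R] [CommRing A] [CommRing T] [Algebra R A] [Algebra R T]
  {B C : Subalgebra R A} {r : R}

theorem exists_pow_smul_mem_of_mem_adjoin [IsDomain R] {s : Finset A}
    (hB : ∀ x ∈ s, ∃ d : R, d ≠ 0 ∧ d • x ∈ B) :
    ∃ d : R, d ≠ 0 ∧ ∀ x ∈ Algebra.adjoin R (s : Set A), ∃ n : ℕ, d ^ n • x ∈ B := by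
  classical
  choose! d hd hdB using hB
  refine ⟨∏ x ∈ s, d x, Finset.prod_ne_zero_iff.2 hd, fun x hx => ?_⟩
  induction hx using Algebra.adjoin_induction with
  | mem x hx =>
    refine ⟨1, ?_⟩
    rw [pow_one, ← Finset.prod_erase_mul _ _ hx, mul_smul]
    exact B.smul_mem (hdB x hx) _
  | algebraMap y => exact ⟨0, B.smul_mem (B.algebraMap_mem y) _⟩
  | add x y _ _ hx hy =>
    obtain ⟨m, hm⟩ := hx
    obtain ⟨n, hn⟩ := hy
    refine ⟨n + m, ?_⟩
    rw [smul_add]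
    refine B.add_mem ?_ ?_
    · rw [pow_add, mul_smul]
      exact B.smul_mem hm _
    · rw [pow_add, mul_comm, mul_smul]
      exact B.smul_mem hn _
  | mul x y _ _ hx hy =>
    obtain ⟨m, hm⟩ := hx
    obtain ⟨n, hn⟩ := hy
    exact ⟨m + n, by rw [pow_add, ← smul_mul_smul_comm]; exact B.mul_mem hm hn⟩

theorem injective_comp_inclusion (h : B ≤ C) (hr : ∀ x ∈ C, ∃ n : ℕ, r ^ n • x ∈ B)
    (hT : IsUnit (algebraMap R T r)) :
    Function.Injective fun φ : C →ₐ[R] T => φ.comp (Subalgebra.inclusion h) := by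
  intro φ ψ hφψ
  ext x
  obtain ⟨n, hn⟩ := hr x x.2
  have hpow : φ (r ^ n • x) = ψ (r ^ n • x) := DFunLike.congr_fun hφψ ⟨_, hn⟩
  rw [map_smul, map_smul, Algebra.smul_def, Algebra.smul_def, map_pow] at hpow
  exact (hT.pow n).mul_left_cancel hpow

/- Inverting `r` makes the inclusion of `B` in `C` an isomorphism. -/
theorem surjective_comp_inclusion (h : B ≤ C) (hr : ∀ x ∈ C, ∃ n : ℕ, r ^ n • x ∈ B)
    (hT : IsUnit (algebraMap R T r)) :
    Function.Surjective fun φ : C →ₐ[R] T => φ.comp (Subalgebra.inclusion h) := by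
  intro φ
  let b := algebraMap R B r
  have hb : IsUnit (φ b) := by rwa [AlgHom.commutes]
  have hinj : Function.Injective (Localization.awayMapₐ (Subalgebra.inclusion h) b) := by
    refine (IsLocalization.Away.map_injective_iff _ _ _).2 fun x hx => ⟨0, ?_⟩
    rw [Subalgebra.inclusion_injective h (hx.trans (map_zero _).symm), mul_zero]
  have hsurj : Function.Surjective (Localization.awayMapₐ (Subalgebra.inclusion h) b) := by
    refine (IsLocalization.Away.map_surjective_iff _ _ _ _).2 fun x => ?_
    obtain ⟨n, hn⟩ := hr x x.2
    refine ⟨⟨_, hn⟩, n, ?_⟩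
    change r ^ n • x = algebraMap R C r ^ n * x
    rw [Algebra.smul_def, map_pow]
  let e := AlgEquiv.ofBijective _ ⟨hinj, hsurj⟩
  have he (x : B) : e.symm (algebraMap C _ (Subalgebra.inclusion h x)) = algebraMap B _ x := by
    rw [AlgEquiv.symm_apply_eq]
    change _ = IsLocalization.Away.map _ _ (Subalgebra.inclusion h).toRingHom b (algebraMap B _ x)
    rw [IsLocalization.Away.map, IsLocalization.map_eq]
    rfl
  refine ⟨((IsLocalization.Away.liftAlgHom b hb).comp e.symm.toAlgHom).comp
    (IsScalarTower.toAlgHom R C _), AlgHom.ext fun x => ?_⟩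
  exact (congrArg _ (he x)).trans (IsLocalization.Away.lift_eq b hb x)

theorem natCard_algHom_eq_of_le (h : B ≤ C) (hr : ∀ x ∈ C, ∃ n : ℕ, r ^ n • x ∈ B)
    (hT : IsUnit (algebraMap R T r)) : Nat.card (C →ₐ[R] T) = Nat.card (B →ₐ[R] T) :=
  Nat.card_congr (Equiv.ofBijective _
    ⟨injective_comp_inclusion h hr hT, surjective_comp_inclusion h hr hT⟩)

theorem exists_natCard_algHom_eq [IsDomain R] (hB : B.FG) (hC : C.FG)
    (hBC : ∀ x ∈ B, ∃ d : R, d ≠ 0 ∧ d • x ∈ C) (hCB : ∀ x ∈ C, ∃ d : R, d ≠ 0 ∧ d • x ∈ B) :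
    ∃ d : R, d ≠ 0 ∧ ∀ (T : Type*) [CommRing T] [Algebra R T], IsUnit (algebraMap R T d) →
      Nat.card (B →ₐ[R] T) = Nat.card (C →ₐ[R] T) := by
  obtain ⟨s, rfl⟩ := hB
  obtain ⟨t, rfl⟩ := hC
  obtain ⟨d, hd, hdB⟩ := exists_pow_smul_mem_of_mem_adjoin
    (B := Algebra.adjoin R (s : Set A) ⊓ Algebra.adjoin R (t : Set A)) fun x hx => by
      obtain ⟨d, hd, hdx⟩ := hBC x (Algebra.subset_adjoin hx)
      exact ⟨d, hd, Subalgebra.smul_mem _ (Algebra.subset_adjoin hx) d, hdx⟩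
  obtain ⟨e, he, heC⟩ := exists_pow_smul_mem_of_mem_adjoin
    (B := Algebra.adjoin R (s : Set A) ⊓ Algebra.adjoin R (t : Set A)) fun x hx => by
      obtain ⟨e, he, hex⟩ := hCB x (Algebra.subset_adjoin hx)
      exact ⟨e, he, hex, Subalgebra.smul_mem _ (Algebra.subset_adjoin hx) e⟩
  refine ⟨d * e, mul_ne_zero hd he, fun T _ _ hT => ?_⟩
  rw [map_mul, IsUnit.mul_iff] at hT
  rw [natCard_algHom_eq_of_le inf_le_left hdB hT.1, natCard_algHom_eq_of_le inf_le_right heC hT.2]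

theorem natCard_algHom_adjoin_singleton {x : A} {f : R[X]}
    (hf : ∀ q : R[X], aeval x q = 0 ↔ f ∣ q) :
    Nat.card (Algebra.adjoin R {x} →ₐ[R] T) = Nat.card {y : T // aeval y f = 0} := by
  let x' : Algebra.adjoin R {x} := ⟨x, Algebra.self_mem_adjoin_singleton R x⟩
  have hx' (q : R[X]) : aeval x' q = 0 ↔ f ∣ q := by
    rw [← hf, ← coe_aeval_mk_apply (x := x), ZeroMemClass.coe_eq_zero]
  have hsurj : Function.Surjective (aeval x' : R[X] →ₐ[R] Algebra.adjoin R {x}) := by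
    rintro ⟨y, hy⟩
    rw [Algebra.adjoin_singleton_eq_range_aeval] at hy
    obtain ⟨q, rfl⟩ := hy
    exact ⟨q, Subtype.ext (coe_aeval_mk_apply (x := x) _)⟩
  have hroot (φ : Algebra.adjoin R {x} →ₐ[R] T) : aeval (φ x') f = 0 := by
    rw [aeval_algHom_apply, (hx' f).2 dvd_rfl, map_zero]
  refine Nat.card_congr (Equiv.ofBijective (fun φ => ⟨φ x', hroot φ⟩) ⟨fun φ ψ h => ?_, ?_⟩)
  · refine AlgHom.adjoin_ext fun y hy => ?_
    obtain rfl := Set.mem_singleton_iff.1 hy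
    exact congrArg Subtype.val h
  · rintro ⟨y, hy⟩
    have hker : RingHom.ker (aeval x' : R[X] →ₐ[R] _).toRingHom ≤
        RingHom.ker (aeval y : R[X] →ₐ[R] T).toRingHom := fun q hq => by
      obtain ⟨g, rfl⟩ := (hx' q).1 (RingHom.mem_ker.1 hq)
      rw [RingHom.mem_ker, AlgHom.toRingHom_eq_coe, RingHom.coe_coe, map_mul, hy, zero_mul]
    have hX := AlgHom.liftOfSurjective_apply (aeval x') hsurj (aeval y) hker X
    rw [aeval_X, aeval_X] at hX
    exact ⟨_, Subtype.ext hX⟩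

end ExtendHom

section RootCount

open Polynomial

variable {f g : ℤ[X]} {p : ℕ}

/-- The number of roots of `f` modulo `p`, written `ω_f(p)`. Roots are represented by the integers
`0, …, p - 1`. -/
def rootCount (f : ℤ[X]) (p : ℕ) : ℕ :=
  ((Finset.range p).filter fun x : ℕ => (p : ℤ) ∣ f.eval (x : ℤ)).card

theorem aeval_intCast_zmod_eq_zero_iff (n : ℤ) : aeval (n : ZMod p) f = 0 ↔ (p : ℤ) ∣ f.eval n := by
  rw [← ZMod.intCast_zmod_eq_zero_iff_dvd, ← eq_intCast (algebraMap ℤ (ZMod p)) n,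
    aeval_algebraMap_apply_eq_algebraMap_eval, eq_intCast]

theorem rootCount_eq_natCard [NeZero p] :
    rootCount f p = Nat.card {x : ZMod p // aeval x f = 0} := by
  classical
  rw [Nat.card_eq_fintype_card, Fintype.card_subtype]
  have hroot (x : ℕ) : aeval (x : ZMod p) f = 0 ↔ (p : ℤ) ∣ f.eval (x : ℤ) := by
    rw [← aeval_intCast_zmod_eq_zero_iff, Int.cast_natCast]
  refine Finset.card_bij' (fun x _ => (x : ZMod p)) (fun x _ => x.val) (fun x hx => ?_)
    (fun x hx => ?_) (fun x hx => ?_) fun x _ => ZMod.natCast_zmod_val x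
  · exact Finset.mem_filter.2 ⟨Finset.mem_univ _, (hroot x).2 (Finset.mem_filter.1 hx).2⟩
  · rw [Finset.mem_filter, Finset.mem_range, ← hroot, ZMod.natCast_zmod_val]
    exact ⟨x.val_lt, (Finset.mem_filter.1 hx).2⟩
  · exact ZMod.val_cast_of_lt (Finset.mem_range.1 (Finset.mem_filter.1 hx).1)

theorem rootCount_lt [NeZero p] {n : ℤ} (hn : ¬(p : ℤ) ∣ f.eval n) : rootCount f p < p := by
  classical
  rw [← aeval_intCast_zmod_eq_zero_iff] at hn
  rw [rootCount_eq_natCard, Nat.card_eq_fintype_card]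
  calc Fintype.card {x : ZMod p // aeval x f = 0} < Fintype.card (ZMod p) :=
        Fintype.card_subtype_lt hn
    _ = p := ZMod.card p

theorem rootCount_le_natDegree (hp : p.Prime) {n : ℤ} (hn : ¬(p : ℤ) ∣ f.eval n) :
    rootCount f p ≤ f.natDegree := by
  have : Fact p.Prime := ⟨hp⟩
  have hf : f.map (algebraMap ℤ (ZMod p)) ≠ 0 := fun h => by
    rw [← aeval_intCast_zmod_eq_zero_iff, ← eval_map_algebraMap, h, eval_zero] at hn
    exact hn rfl
  calc rootCount f p = Nat.card (f.rootSet (ZMod p)) := by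
        rw [rootCount_eq_natCard]
        exact Nat.card_congr (Equiv.subtypeEquivRight fun x => (mem_rootSet'.trans
          (and_iff_right hf)).symm)
    _ ≤ f.natDegree := by
        rw [Nat.card_coe_set_eq]
        exact ncard_rootSet_le f (ZMod p)

theorem eventually_not_natCast_dvd {d : ℤ} (hd : d ≠ 0) : ∀ᶠ p : ℕ in atTop, ¬(p : ℤ) ∣ d := by
  filter_upwards [eventually_gt_atTop d.natAbs] with p hp h
  exact hp.not_ge (Nat.le_of_dvd (Int.natAbs_pos.2 hd) (Int.natCast_dvd.1 h))

theorem exists_mul_add_mul_eq_C (hf : Irreducible f) (hdeg : f.natDegree ≠ 0) (hfg : ¬f ∣ g) :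
    ∃ d : ℤ, d ≠ 0 ∧ ∃ u v : ℤ[X], f * u + g * v = C d := by
  obtain ⟨u, v, -, -, huv⟩ :=
    exists_mul_add_mul_eq_C_resultant f g le_rfl le_rfl (Or.inl hdeg)
  refine ⟨f.resultant g, ?_, u, v, huv⟩
  have hprim := hf.isPrimitive hdeg
  have hcop : IsCoprime (f.map (Int.castRingHom ℚ)) (g.map (Int.castRingHom ℚ)) := by
    rw [((IsPrimitive.Int.irreducible_iff_irreducible_map_cast hprim).1 hf).coprime_iff_not_dvd,
      ← IsPrimitive.Int.dvd_iff_map_cast_dvd_map_cast f g hprim]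
    exact hfg
  have hres := resultant_ne_zero _ _ hcop
  rw [natDegree_map_eq_of_injective Int.cast_injective,
    natDegree_map_eq_of_injective Int.cast_injective, resultant_map_map] at hres
  exact ne_zero_of_map hres

theorem eventually_not_dvd_eval_and_dvd_eval (hf : Irreducible f) (hdeg : f.natDegree ≠ 0)
    (hfg : ¬f ∣ g) :
    ∀ᶠ p : ℕ in atTop, ∀ x : ℤ, ¬((p : ℤ) ∣ f.eval x ∧ (p : ℤ) ∣ g.eval x) := by
  obtain ⟨d, hd, u, v, huv⟩ := exists_mul_add_mul_eq_C hf hdeg hfg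
  filter_upwards [eventually_not_natCast_dvd hd] with p hp x hx
  have heval := congrArg (eval x) huv
  rw [eval_add, eval_mul, eval_mul, eval_C] at heval
  exact hp (heval ▸ dvd_add (hx.1.mul_right _) (hx.2.mul_right _))

theorem eventually_rootCount_prod_eq {ι : Type*} [Fintype ι] {f : ι → ℤ[X]}
    (hirr : ∀ i, Irreducible (f i)) (hdeg : ∀ i, (f i).natDegree ≠ 0)
    (hassoc : ∀ i j, i ≠ j → ¬Associated (f i) (f j)) :
    ∀ᶠ p : ℕ in atTop, p.Prime → rootCount (∏ i, f i) p = ∑ i, rootCount (f i) p := by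
  classical
  have hcop : ∀ᶠ p : ℕ in atTop, ∀ i j, i ≠ j →
      ∀ x : ℤ, ¬((p : ℤ) ∣ (f i).eval x ∧ (p : ℤ) ∣ (f j).eval x) := by
    simp only [eventually_all]
    exact fun i j hij => eventually_not_dvd_eval_and_dvd_eval (hirr i) (hdeg i)
      fun h => hassoc i j hij ((hirr i).associated_of_dvd (hirr j) h)
  filter_upwards [hcop] with p hcop hp
  have hunion : ((Finset.range p).filter fun x : ℕ => (p : ℤ) ∣ (∏ i, f i).eval (x : ℤ)) =
      Finset.univ.biUnion fun i =>
        (Finset.range p).filter fun x : ℕ => (p : ℤ) ∣ (f i).eval (x : ℤ) := by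
    ext x
    simp [eval_prod, (Nat.prime_iff_prime_int.1 hp).dvd_finsetProd_iff]
  rw [rootCount, hunion, Finset.card_biUnion]
  · rfl
  · exact fun i _ j _ hij => Finset.disjoint_filter.2 fun x _ hi hj => hcop i j hij x ⟨hi, hj⟩

end RootCount

section RootCountIdealCount

open Ideal NumberField Polynomial Topology

theorem idealCount_eq_natCard_algHom {S : Type*} [CommRing S] [IsDedekindDomain S]
    [Module.Free ℤ S] {p : ℕ} (hp : p.Prime) :
    idealCount S p = Nat.card (S →ₐ[ℤ] ZMod p) := by
  have : Fact p.Prime := ⟨hp⟩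
  have hker (φ : S →+* ZMod p) : absNorm (RingHom.ker φ) = p := by
    rw [absNorm_apply, Submodule.cardQuot_apply, Nat.card_congr
      (RingHom.quotientKerEquivOfSurjective (ZMod.ringHom_surjective φ)).toEquiv, Nat.card_zmod]
  rw [idealCount_apply hp.ne_zero, ← Nat.card_congr (RingHom.equivIntAlgHom S (ZMod p))]
  symm
  refine Nat.card_congr (Equiv.ofBijective (fun φ => ⟨RingHom.ker φ, hker φ⟩) ⟨?_, ?_⟩)
  · exact fun φ ψ h => ZMod.ringHom_eq_of_ker_eq φ ψ (congrArg Subtype.val h)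
  · rintro ⟨I, hI⟩
    have hcard : Nat.card (S ⧸ I) = p := by rw [← hI, absNorm_apply, Submodule.cardQuot_apply]
    have : Finite (S ⧸ I) := Nat.finite_of_card_ne_zero (hcard ▸ hp.ne_zero)
    have : Fintype (S ⧸ I) := Fintype.ofFinite _
    rw [Nat.card_eq_fintype_card] at hcard
    let e : ZMod p ≃+* S ⧸ I := ZMod.ringEquivOfPrime _ hp hcard
    refine ⟨(e.symm : (S ⧸ I) →+* ZMod p).comp (Ideal.Quotient.mk I), Subtype.ext ?_⟩
    ext x
    simp [RingHom.mem_ker, Ideal.Quotient.eq_zero_iff_mem]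

theorem exists_smul_aeval_mem_adjoin_singleton {A : Type*} [CommRing A] [Algebra ℚ A] (α : A)
    (q : ℚ[X]) : ∃ d : ℤ, d ≠ 0 ∧ d • aeval α q ∈ Algebra.adjoin ℤ {α} := by
  obtain ⟨d, hd, hq⟩ := IsLocalization.integerNormalization_spec (nonZeroDivisors ℤ) q
  refine ⟨d, nonZeroDivisors.ne_zero hd, ?_⟩
  rw [← map_zsmul, ← hq, aeval_map_algebraMap]
  exact aeval_mem_adjoin_singleton ℤ α

variable {f : ℤ[X]}

theorem eventually_rootCount_eq_idealCount {K : Type*} [Field K] [NumberField K] {α : K}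
    (hf : ∀ q : ℤ[X], aeval α q = 0 ↔ f ∣ q)
    (hα : ∀ x : K, ∃ d : ℤ, d ≠ 0 ∧ d • x ∈ Algebra.adjoin ℤ {α}) :
    ∀ᶠ p : ℕ in atTop, p.Prime → rootCount f p = idealCount (𝓞 K) p := by
  have hfg : (integralClosure ℤ K).FG :=
    Subalgebra.fg_of_fg_toSubmodule
      (Module.Finite.iff_fg.1 (inferInstanceAs (Module.Finite ℤ (𝓞 K))))
  obtain ⟨d, hd, hcard⟩ := exists_natCard_algHom_eq hfg
    (Subalgebra.fg_adjoin_finset {α}) (fun x _ => by simpa using hα x)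
    (fun x _ => ((IsFractionRing.isAlgebraic_iff ℤ ℚ K).2
      (Algebra.IsAlgebraic.isAlgebraic x)).exists_integral_multiple)
  filter_upwards [eventually_not_natCast_dvd hd] with p hpd hp
  have : Fact p.Prime := ⟨hp⟩
  have hunit : IsUnit (algebraMap ℤ (ZMod p) d) := by
    rwa [isUnit_iff_ne_zero, eq_intCast, Ne, ZMod.intCast_zmod_eq_zero_iff_dvd]
  rw [rootCount_eq_natCard, ← natCard_algHom_adjoin_singleton hf, ← Finset.coe_singleton,
    idealCount_eq_natCard_algHom hp]
  exact (hcard (ZMod p) hunit).symm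

theorem exists_tendsto_sum_primes_congr {u v : ℕ → ℝ}
    (huv : ∀ᶠ p in atTop, p.Prime → u p = v p)
    (hu : ∃ L : ℝ, Tendsto (fun N : ℕ => ∑ p ∈ (Finset.range (N + 1)).filter Nat.Prime, u p)
      atTop (𝓝 L)) :
    ∃ L : ℝ, Tendsto (fun N : ℕ => ∑ p ∈ (Finset.range (N + 1)).filter Nat.Prime, v p)
      atTop (𝓝 L) := by
  obtain ⟨L, hL⟩ := hu
  obtain ⟨M, hM⟩ := eventually_atTop.1 huv
  refine ⟨L + ∑ p ∈ (Finset.range M).filter Nat.Prime, (v p - u p),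
    (hL.add tendsto_const_nhds).congr' ?_⟩
  filter_upwards [eventually_ge_atTop M] with N hN
  have hsub : ∑ p ∈ (Finset.range M).filter Nat.Prime, (v p - u p) =
      ∑ p ∈ (Finset.range (N + 1)).filter Nat.Prime, (v p - u p) := by
    refine Finset.sum_subset (Finset.filter_subset_filter _ (Finset.range_mono (by lia)))
      fun p hp hpM => ?_
    rw [Finset.mem_filter, Finset.mem_range] at hp hpM
    rw [hM p (by grind) hp.2, sub_self]
  rw [hsub, ← Finset.sum_add_distrib]
  exact Finset.sum_congr rfl fun p _ => add_sub_cancel _ _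

theorem aeval_root_eq_zero_iff_dvd (hf : f.IsPrimitive) (q : ℤ[X]) :
    aeval (AdjoinRoot.root (f.map (Int.castRingHom ℚ))) q = 0 ↔ f ∣ q := by
  rw [← aeval_map_algebraMap ℚ, AdjoinRoot.aeval_eq, AdjoinRoot.mk_eq_zero, algebraMap_int_eq,
    ← IsPrimitive.Int.dvd_iff_map_cast_dvd_map_cast f q hf]

theorem exists_numberField_aeval_eq_zero_iff_dvd (hf : Irreducible f) (hdeg : f.natDegree ≠ 0) :
    ∃ (K : Type) (_ : Field K) (_ : NumberField K) (α : K),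
      (∀ q : ℤ[X], aeval α q = 0 ↔ f ∣ q) ∧
      ∀ x : K, ∃ d : ℤ, d ≠ 0 ∧ d • x ∈ Algebra.adjoin ℤ {α} := by
  have hprim := hf.isPrimitive hdeg
  have hF := (IsPrimitive.Int.irreducible_iff_irreducible_map_cast hprim).1 hf
  have : Fact (Irreducible (f.map (Int.castRingHom ℚ))) := ⟨hF⟩
  have : FiniteDimensional ℚ (AdjoinRoot (f.map (Int.castRingHom ℚ))) :=
    (AdjoinRoot.powerBasis hF.ne_zero).finite
  have : CharZero (AdjoinRoot (f.map (Int.castRingHom ℚ))) := algebraRat.charZero _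
  refine ⟨AdjoinRoot (f.map (Int.castRingHom ℚ)), inferInstance, { }, AdjoinRoot.root _,
    aeval_root_eq_zero_iff_dvd hprim, fun x => ?_⟩
  obtain ⟨q, rfl⟩ := AdjoinRoot.mk_surjective x
  rw [← AdjoinRoot.aeval_eq]
  exact exists_smul_aeval_mem_adjoin_singleton _ q

theorem exists_tendsto_sum_primes_rootCount_sub_one_div (hf : Irreducible f)
    (hdeg : f.natDegree ≠ 0) :
    ∃ L : ℝ, Tendsto (fun N : ℕ => ∑ p ∈ (Finset.range (N + 1)).filter Nat.Prime,
      ((rootCount f p : ℝ) - 1) / p) atTop (𝓝 L) := by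
  obtain ⟨K, _, _, α, hα, hgen⟩ := exists_numberField_aeval_eq_zero_iff_dvd hf hdeg
  refine exists_tendsto_sum_primes_congr ?_ (exists_tendsto_sum_primes_idealCount_sub_one_div K)
  filter_upwards [eventually_rootCount_eq_idealCount hα hgen] with p hp hpp
  rw [hp hpp]

end RootCountIdealCount

section EulerFactors

open Topology

theorem abs_add_log_one_sub_le {x : ℝ} (h0 : 0 ≤ x) (h1 : x ≤ 1 / 2) :
    |x + Real.log (1 - x)| ≤ 2 * x ^ 2 := by
  have h := Real.abs_log_sub_add_sum_range_le (x := x) (by rw [abs_of_nonneg h0]; linarith) 1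
  simp only [Finset.sum_range_one, abs_of_nonneg h0, zero_add, pow_one, Nat.cast_zero,
    div_one, one_add_one_eq_two] at h
  refine h.trans ?_
  rw [div_le_iff₀ (by linarith)]
  nlinarith [sq_nonneg x]

theorem summable_div_add_log_one_sub_div {a : ℕ → ℝ} {B : ℝ} (h0 : ∀ n, 0 ≤ a n)
    (hB : ∀ n, a n ≤ B) : Summable fun n : ℕ => a n / n + Real.log (1 - a n / n) := by
  have hs : Summable fun n : ℕ => 2 * B ^ 2 * (1 / (n : ℝ) ^ 2) :=
    (Real.summable_one_div_nat_pow.2 one_lt_two).mul_left _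
  refine Summable.of_norm_bounded_eventually_nat hs ?_
  filter_upwards [eventually_gt_atTop 0, eventually_ge_atTop ⌈2 * B⌉₊] with n hn hBn
  have hn0 : (0 : ℝ) < n := by exact_mod_cast hn
  have hle : a n / n ≤ 1 / 2 := by
    rw [div_le_iff₀ hn0]
    linarith [hB n, Nat.ceil_le.1 hBn]
  calc ‖a n / n + Real.log (1 - a n / n)‖ ≤ 2 * (a n / n) ^ 2 :=
        abs_add_log_one_sub_le (div_nonneg (h0 n) hn0.le) hle
    _ = 2 * a n ^ 2 * (1 / (n : ℝ) ^ 2) := by rw [div_pow]; ring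
    _ ≤ 2 * B ^ 2 * (1 / (n : ℝ) ^ 2) := by
        have := h0 n
        have := hB n
        gcongr

theorem exists_tendsto_sum_primes_div_add_log {a : ℕ → ℝ} {B : ℝ}
    (h0 : ∀ p, p.Prime → 0 ≤ a p) (hB : ∀ p, p.Prime → a p ≤ B) :
    ∃ L : ℝ, Tendsto (fun N : ℕ => ∑ p ∈ (Finset.range (N + 1)).filter Nat.Prime,
      (a p / p + Real.log (1 - a p / p))) atTop (𝓝 L) := by
  have hB0 : 0 ≤ B := (h0 2 Nat.prime_two).trans (hB 2 Nat.prime_two)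
  have hs : Summable fun n : ℕ => (if n.Prime then a n else 0) / n +
      Real.log (1 - (if n.Prime then a n else 0) / n) :=
    summable_div_add_log_one_sub_div (fun n => by split_ifs with hn; exacts [h0 n hn, le_rfl])
      fun n => by split_ifs with hn; exacts [hB n hn, hB0]
  refine ⟨_, (hs.hasSum.tendsto_sum_nat.comp (tendsto_add_atTop_nat 1)).congr fun N => ?_⟩
  rw [Function.comp_apply, Finset.sum_filter]
  refine Finset.sum_congr rfl fun p _ => ?_
  split_ifs
  · rfl
  · simp

theorem exists_tendsto_prod_primes_of_tendsto_sum {ω : ℕ → ℕ} {k B : ℕ}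
    (hlt : ∀ p, p.Prime → ω p < p) (hB : ∀ p, p.Prime → ω p ≤ B)
    (hsum : ∃ L : ℝ, Tendsto (fun N : ℕ => ∑ p ∈ (Finset.range (N + 1)).filter Nat.Prime,
      ((ω p : ℝ) - k) / p) atTop (𝓝 L)) :
    ∃ L : ℝ, 0 < L ∧ Tendsto (fun N : ℕ => ∏ p ∈ (Finset.range (N + 1)).filter Nat.Prime,
      ((1 - 1 / (p : ℝ))⁻¹ ^ k * (1 - (ω p : ℝ) / p))) atTop (𝓝 L) := by
  obtain ⟨L, hL⟩ := hsum
  obtain ⟨L₁, hL₁⟩ := exists_tendsto_sum_primes_div_add_log (a := fun _ => 1)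
    (fun _ _ => zero_le_one) fun _ _ => le_rfl
  obtain ⟨Lω, hLω⟩ := exists_tendsto_sum_primes_div_add_log (a := fun p => (ω p : ℝ)) (B := B)
    (fun _ _ => Nat.cast_nonneg _) fun p hp => Nat.cast_le.2 (hB p hp)
  refine ⟨_, Real.exp_pos _, ((Real.continuous_exp.tendsto _).comp
    ((hLω.sub (hL₁.const_mul (k : ℝ))).sub hL)).congr fun N => ?_⟩
  rw [Function.comp_apply, Finset.mul_sum, ← Finset.sum_sub_distrib, ← Finset.sum_sub_distrib,
    Real.exp_sum]
  refine Finset.prod_congr rfl fun p hp => ?_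
  have hpp : p.Prime := (Finset.mem_filter.1 hp).2
  have hp0 : (0 : ℝ) < p := by exact_mod_cast hpp.pos
  have h1 : 0 < 1 - 1 / (p : ℝ) := by
    rw [sub_pos, div_lt_one hp0]
    exact_mod_cast hpp.one_lt
  have hω : 0 < 1 - (ω p : ℝ) / p := by
    rw [sub_pos, div_lt_one hp0]
    exact_mod_cast hlt p hpp
  have hlog : Real.log ((1 - 1 / (p : ℝ))⁻¹ ^ k * (1 - (ω p : ℝ) / p)) =
      (ω p : ℝ) / p + Real.log (1 - (ω p : ℝ) / p) -
        k * (1 / (p : ℝ) + Real.log (1 - 1 / p)) - ((ω p : ℝ) - k) / p := by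
    rw [Real.log_mul (by positivity) hω.ne', Real.log_pow, Real.log_inv]
    ring
  rw [← hlog, Real.exp_log (by positivity)]

end EulerFactors

section RootCountProd

open Polynomial Topology

theorem natDegree_ne_zero_of_irreducible_of_forall_prime {f : ℤ[X]} (hf : Irreducible f)
    (h : ∀ p : ℕ, p.Prime → ∃ n : ℤ, ¬(p : ℤ) ∣ f.eval n) : f.natDegree ≠ 0 := by
  intro hdeg
  obtain ⟨c, rfl⟩ := natDegree_eq_zero.1 hdeg
  have hc : c.natAbs ≠ 1 := fun hc =>
    hf.not_isUnit (isUnit_C.2 (Int.isUnit_iff_natAbs_eq.2 hc))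
  obtain ⟨p, hp, hpc⟩ := Nat.exists_prime_and_dvd hc
  obtain ⟨n, hn⟩ := h p hp
  exact hn (eval_C (R := ℤ) ▸ Int.natCast_dvd.2 hpc)

theorem exists_tendsto_sum_primes_rootCount_prod {ι : Type*} [Fintype ι] {f : ι → ℤ[X]}
    (hirr : ∀ i, Irreducible (f i)) (hdeg : ∀ i, (f i).natDegree ≠ 0)
    (hassoc : ∀ i j, i ≠ j → ¬Associated (f i) (f j)) :
    ∃ L : ℝ, Tendsto (fun N : ℕ => ∑ p ∈ (Finset.range (N + 1)).filter Nat.Prime,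
      ((rootCount (∏ i, f i) p : ℝ) - Fintype.card ι) / p) atTop (𝓝 L) := by
  choose L hL using fun i =>
    exists_tendsto_sum_primes_rootCount_sub_one_div (hirr i) (hdeg i)
  have hsum : Tendsto (fun N : ℕ => ∑ p ∈ (Finset.range (N + 1)).filter Nat.Prime,
      ∑ i, ((rootCount (f i) p : ℝ) - 1) / p) atTop (𝓝 (∑ i, L i)) :=
    (tendsto_finsetSum Finset.univ fun i _ => hL i).congr fun N => Finset.sum_comm
  refine exists_tendsto_sum_primes_congr ?_ ⟨_, hsum⟩
  filter_upwards [eventually_rootCount_prod_eq hirr hdeg hassoc] with p hp hpp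
  rw [hp hpp, ← Finset.sum_div, Finset.sum_sub_distrib]
  simp

end RootCountProd

/-- Convergence of the Bateman–Horn product: if `f₁, …, f_k ∈ ℤ[x]` are irreducible,
pairwise non-associated, and their product `f` does not vanish identically modulo any
prime, then `∏_p (1 − 1/p)^{−k} (1 − ω_f(p)/p)` converges to a positive limit. -/
theorem batemanHorn_product_converges (k : ℕ) (f : Fin k → Polynomial ℤ)
    (hirr : ∀ i, Irreducible (f i))
    (hassoc : ∀ i j, i ≠ j → ¬Associated (f i) (f j))
    (hnv : ∀ p : ℕ, p.Prime → ∃ n : ℤ, ¬(p : ℤ) ∣ (∏ i, f i).eval n) :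
    ∃ L : ℝ, 0 < L ∧ Tendsto (fun N : ℕ =>
        ∏ p ∈ (Finset.range (N + 1)).filter Nat.Prime,
          ((1 - 1 / (p : ℝ))⁻¹ ^ k *
            (1 - (((Finset.range p).filter
                fun x : ℕ => (p : ℤ) ∣ (∏ i, f i).eval (x : ℤ)).card : ℝ) / p)))
      atTop (nhds L) := by
  have hdeg (i : Fin k) : (f i).natDegree ≠ 0 := by
    refine natDegree_ne_zero_of_irreducible_of_forall_prime (hirr i) fun p hp => ?_
    obtain ⟨n, hn⟩ := hnv p hp
    rw [Polynomial.eval_prod] at hn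
    exact ⟨n, fun h => hn (h.trans (Finset.dvd_prod_of_mem _ (Finset.mem_univ i)))⟩
  have hlt (p : ℕ) (hp : p.Prime) : rootCount (∏ i, f i) p < p := by
    have : NeZero p := ⟨hp.ne_zero⟩
    exact (hnv p hp).elim fun _ => rootCount_lt
  have hle (p : ℕ) (hp : p.Prime) : rootCount (∏ i, f i) p ≤ (∏ i, f i).natDegree :=
    (hnv p hp).elim fun _ => rootCount_le_natDegree hp
  have hsum := exists_tendsto_sum_primes_rootCount_prod hirr hdeg hassoc
  rw [Fintype.card_fin] at hsum
  exact exists_tendsto_prod_primes_of_tendsto_sum hlt hle hsum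
end

section
/- If f ∈ ℤ[x] is nonconstant and f(n) is a prime number for infinitely many natural numbers n, then f is irreducible in ℤ[x]; that is, f cannot be written as a product of two polynomials in ℤ[x], neither of which is ±1. -/
/-!
If `f = g * h`, then wherever `f` takes an irreducible value one of `g`, `h` takes a unit value, so
one of them takes unit values at infinitely many points. When the ring has only finitely many units,
that factor takes a single unit value infinitely often, hence is the corresponding constant.
-/

section

open Polynomial

variable {R : Type*} [CommRing R] [IsDomain R]

theorem exists_eq_C_of_infinite_eval_mem {p : R[X]} {T : Set R} (hT : T.Finite)
    (hp : {r : R | p.eval r ∈ T}.Infinite) : ∃ c ∈ T, p = C c := by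
  by_contra! hne
  have hfiber : ∀ c ∈ T, {r : R | p.eval r = c}.Finite := by
    intro c hc
    by_contra! hinf
    exact hne c hc (eq_of_infinite_eval_eq p (C c) (by simpa only [eval_C] using hinf))
  exact hp (hT.preimage' hfiber)

theorem isUnit_of_infinite_isUnit_eval [Finite Rˣ] {p : R[X]}
    (hp : {r : R | IsUnit (p.eval r)}.Infinite) : IsUnit p := by
  obtain ⟨c, hc, rfl⟩ := exists_eq_C_of_infinite_eval_mem (Set.finite_range Units.val) hp
  exact isUnit_C.mpr hc

theorem irreducible_of_infinitely_many_prime_values_general [Finite Rˣ] {f : R[X]}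
    (hf : {r : R | Irreducible (f.eval r)}.Infinite) : Irreducible f where
  not_isUnit hunit := by
    obtain ⟨r, hr⟩ := hf.nonempty
    exact hr.not_isUnit (hunit.map (evalRingHom r))
  isUnit_or_isUnit g h hgh := by
    have hsub : {r | Irreducible (f.eval r)} ⊆
        {r | IsUnit (g.eval r)} ∪ {r | IsUnit (h.eval r)} :=
      fun r hr => hr.isUnit_or_isUnit (by rw [hgh, eval_mul])
    exact (Set.infinite_union.mp (hf.mono hsub)).imp
      isUnit_of_infinite_isUnit_eval isUnit_of_infinite_isUnit_eval

end

/-- If `f ∈ ℤ[x]` is nonconstant and `f(n)` is a (positive) prime for infinitely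
many natural numbers `n`, then `f` is irreducible in `ℤ[x]`. -/
theorem irreducible_of_infinitely_many_prime_values (f : Polynomial ℤ)
    (hf : 0 < f.natDegree)
    (hprime : {n : ℕ | 0 < f.eval (n : ℤ) ∧ Prime (f.eval (n : ℤ))}.Infinite) :
    Irreducible f :=
  irreducible_of_infinitely_many_prime_values_general <|
    (hprime.image Nat.cast_injective.injOn).mono <|
      Set.image_subset_iff.mpr fun _ hn => hn.2.irreducible
end
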